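/- Let p ≥ q > 1 and θ ∈ (0, π/2). If h is a positive convex solution of det(∇²h + hσ) = f·h^{p-1}(h² + |∇h|²)^{(n+1-q)/2} in C_θ with ∇_μ h = cot θ · h on ∂C_θ, where f > 0 is smooth on C_θ, then there exists a constant C depending only on n, p, q, min_{C_θ} f and ‖f‖_{C¹(C_θ)} such that max_{C_θ} |∇ log h| ≤ C. Moreover, if p = q = n + 1, the constant C can be chosen independent of p and q. -/

import Mathlib

/- Formalization of statements from "The L_p dual Minkowski problem for capillary
hypersurfaces".

We work in the ambient space `ℝ^{n+1}`.  The spherical cap `C_θ` is the part of the unit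
sphere centred at `cos θ • e` (where `e = -E_{n+1}`) lying in the closed upper half-space.
Functions on `C_θ` are represented by ambient functions `h : Euc n → ℝ`; the intrinsic
(round-metric) gradient `∇h` and Hessian `∇²h` of the restriction of `h` to `C_θ` are
expressed through ambient derivatives (for tangential arguments these expressions depend
only on the restriction of `h` to the cap).  The quantity `det(∇²h + hσ)` is encoded as the
determinant of the endomorphism of `ℝ^{n+1}` acting as `∇²h + hσ` on the tangent space of
the cap and as the identity on the normal line. -/

open Real Set
open scoped RealInnerProductSpace

noncomputable section

/-- Ambient Euclidean space `ℝ^{n+1}`. -/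
abbrev Euc (n : ℕ) : Type := EuclideanSpace ℝ (Fin (n + 1))

/-- The unit vector `e = -E_{n+1}`. -/
def eVec (n : ℕ) : Euc n := -(EuclideanSpace.single (Fin.last n) (1 : ℝ))

/-- `ν(ξ) = ξ - cos θ • e`, the unit normal (at `ξ`) of the sphere containing the cap `C_θ`. -/
def sphNormal (n : ℕ) (θ : ℝ) (ξ : Euc n) : Euc n := ξ - Real.cos θ • eVec n

/-- The spherical cap `C_θ = {ξ ∈ closure ℝ^{n+1}_+ : |ξ - cos θ • e| = 1}`. -/
def cap (n : ℕ) (θ : ℝ) : Set (Euc n) :=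
  {ξ | 0 ≤ ξ (Fin.last n) ∧ ‖sphNormal n θ ξ‖ = 1}

/-- The boundary `∂C_θ`. -/
def capBdry (n : ℕ) (θ : ℝ) : Set (Euc n) :=
  {ξ | ξ (Fin.last n) = 0 ∧ ‖sphNormal n θ ξ‖ = 1}

/-- The outward unit conormal `μ` of `∂C_θ` in `C_θ` (at boundary points). -/
def conormal (n : ℕ) (θ : ℝ) (ξ : Euc n) : Euc n :=
  Real.cot θ • ξ + Real.sin θ • eVec n

/-- Orthogonal projection of `ℝ^{n+1}` onto the tangent space of the cap at `ξ`. -/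
def tproj (n : ℕ) (θ : ℝ) (ξ : Euc n) : Euc n →L[ℝ] Euc n :=
  ContinuousLinearMap.id ℝ (Euc n) - (innerSL ℝ (sphNormal n θ ξ)).smulRight (sphNormal n θ ξ)

/-- `X` is tangent to the cap at `ξ`. -/
def IsTangent (n : ℕ) (θ : ℝ) (ξ X : Euc n) : Prop :=
  ⟪X, sphNormal n θ ξ⟫ = 0

/-- Intrinsic (round-metric) gradient `∇h` of `h` on the cap. -/
def sgrad (n : ℕ) (θ : ℝ) (h : Euc n → ℝ) (ξ : Euc n) : Euc n :=
  tproj n θ ξ (gradient h ξ)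

/-- Intrinsic (round-metric) Hessian `∇²h(X,Y)` of `h` on the cap (tangential arguments). -/
def shess (n : ℕ) (θ : ℝ) (h : Euc n → ℝ) (ξ X Y : Euc n) : ℝ :=
  ⟪(fderiv ℝ (gradient h) ξ) X, Y⟫ - ⟪gradient h ξ, sphNormal n θ ξ⟫ * ⟪X, Y⟫

/-- Endomorphism representing the intrinsic Hessian `∇²h` on tangent vectors
(and vanishing on the normal line). -/
def thessOp (n : ℕ) (θ : ℝ) (h : Euc n → ℝ) (ξ : Euc n) : Euc n →L[ℝ] Euc n :=
  ((tproj n θ ξ).comp ((fderiv ℝ (gradient h) ξ).comp (tproj n θ ξ)))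
    - ⟪gradient h ξ, sphNormal n θ ξ⟫ • tproj n θ ξ

/-- Rank-one projection onto the normal direction at `ξ`. -/
def normalPart (n : ℕ) (θ : ℝ) (ξ : Euc n) : Euc n →L[ℝ] Euc n :=
  (innerSL ℝ (sphNormal n θ ξ)).smulRight (sphNormal n θ ξ)

/-- Endomorphism acting as `∇²h + hσ` on the tangent space and as the identity on the
normal line. -/
def hessOp (n : ℕ) (θ : ℝ) (h : Euc n → ℝ) (ξ : Euc n) : Euc n →L[ℝ] Euc n :=
  thessOp n θ h ξ + h ξ • tproj n θ ξ + normalPart n θ ξ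

/-- `det(∇²h + hσ)` at `ξ`. -/
def sdet (n : ℕ) (θ : ℝ) (h : Euc n → ℝ) (ξ : Euc n) : ℝ :=
  LinearMap.det (hessOp n θ h ξ).toLinearMap

/-- `h > 0` on the cap. -/
def PosOnCap (n : ℕ) (θ : ℝ) (h : Euc n → ℝ) : Prop := ∀ ξ ∈ cap n θ, 0 < h ξ

/-- Convexity of a solution: `∇²h + hσ > 0` on the cap. -/
def IsConvexSol (n : ℕ) (θ : ℝ) (h : Euc n → ℝ) : Prop :=
  ∀ ξ ∈ cap n θ, ∀ X : Euc n, IsTangent n θ ξ X → X ≠ 0 →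
    0 < shess n θ h ξ X X + h ξ * ⟪X, X⟫

/-- The right-hand side `f·h^{p-1}·(h² + |∇h|²)^{(n+1-q)/2}`. -/
def eqRHS (n : ℕ) (θ p q : ℝ) (f h : Euc n → ℝ) (ξ : Euc n) : ℝ :=
  f ξ * h ξ ^ (p - 1) * (h ξ ^ 2 + ‖sgrad n θ h ξ‖ ^ 2) ^ (((n : ℝ) + 1 - q) / 2)

/-- `h` solves `det(∇²h + hσ) = f·h^{p-1}(h² + |∇h|²)^{(n+1-q)/2}` in `C_θ`. -/
def SolvesEq (n : ℕ) (θ p q : ℝ) (f h : Euc n → ℝ) : Prop :=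
  ∀ ξ ∈ cap n θ, sdet n θ h ξ = eqRHS n θ p q f h ξ

/-- Robin boundary condition `∇_μ h = cot θ · h` on `∂C_θ`. -/
def RobinBC (n : ℕ) (θ : ℝ) (h : Euc n → ℝ) : Prop :=
  ∀ ξ ∈ capBdry n θ, ⟪sgrad n θ h ξ, conormal n θ ξ⟫ = Real.cot θ * h ξ

/-- `l(ξ) = sin²θ + cos θ·⟨ξ, e⟩`. -/
def lFun (n : ℕ) (θ : ℝ) (ξ : Euc n) : ℝ :=
  Real.sin θ ^ 2 + Real.cos θ * ⟪ξ, eVec n⟫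

/-- `‖f‖_{C⁰(C_θ)} ≤ K`. -/
def CZeroNormLe (n : ℕ) (θ : ℝ) (f : Euc n → ℝ) (K : ℝ) : Prop :=
  ∀ ξ ∈ cap n θ, |f ξ| ≤ K

/-- `‖f‖_{C¹(C_θ)} ≤ K`. -/
def COneNormLe (n : ℕ) (θ : ℝ) (f : Euc n → ℝ) (K : ℝ) : Prop :=
  CZeroNormLe n θ f K ∧ ∀ ξ ∈ cap n θ, ‖sgrad n θ f ξ‖ ≤ K

/-- `‖f‖_{C²(C_θ)} ≤ K`. -/
def CTwoNormLe (n : ℕ) (θ : ℝ) (f : Euc n → ℝ) (K : ℝ) : Prop :=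
  COneNormLe n θ f K ∧
    ∀ ξ ∈ cap n θ, ∀ X Y : Euc n, IsTangent n θ ξ X → IsTangent n θ ξ Y →
      |shess n θ f ξ X Y| ≤ K * ‖X‖ * ‖Y‖

/-- The linearized operator `L_h(γ)` of the equation `𝒢(∇²h,h) = 𝒥₁(∇h,h)` at `h`:
the derivative at `ε = 0` of `𝒢 - 𝒥₁` along the variation `h_ε = h·e^{εγ}`
(cf. equation (5.4) of the paper, which is exactly this derivative). -/
def linOp (n : ℕ) (θ p q : ℝ) (f h γ : Euc n → ℝ) (ξ : Euc n) : ℝ :=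
  deriv (fun ε : ℝ =>
    sdet n θ (fun x => h x * Real.exp (ε * γ x)) ξ
      - eqRHS n θ p q f (fun x => h x * Real.exp (ε * γ x)) ξ) 0

/-- Endomorphism acting as `l·∇²u + cos θ·(∇u ⊗ e^T + e^T ⊗ ∇u) + uσ` on the tangent space
and as the identity on the normal line. -/
def capillaryOp (n : ℕ) (θ : ℝ) (u : Euc n → ℝ) (ξ : Euc n) : Euc n →L[ℝ] Euc n :=
  lFun n θ ξ • thessOp n θ u ξ
    + Real.cos θ • ((innerSL ℝ (sgrad n θ u ξ)).smulRight (tproj n θ ξ (eVec n))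
        + (innerSL ℝ (tproj n θ ξ (eVec n))).smulRight (sgrad n θ u ξ))
    + u ξ • tproj n θ ξ + normalPart n θ ξ

/-- Endomorphism acting as `∇²v + ∇v ⊗ ∇v + σ` on the tangent space and as the identity on
the normal line. -/
def logOp (n : ℕ) (θ : ℝ) (v : Euc n → ℝ) (ξ : Euc n) : Euc n →L[ℝ] Euc n :=
  thessOp n θ v ξ + (innerSL ℝ (sgrad n θ v ξ)).smulRight (sgrad n θ v ξ)
    + tproj n θ ξ + normalPart n θ ξ

/-- Geodesic distance on `C_θ` from `ξ` to the top point `N = (0,…,0,1-cos θ)`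
(for `θ ∈ (0,π/2)` the cap is geodesically convex, so this is `arccos ⟨ν(ξ), ν(N)⟩`). -/
def distToTop (n : ℕ) (θ : ℝ) (ξ : Euc n) : ℝ :=
  Real.arccos (ξ (Fin.last n) + Real.cos θ)

/-- The function `d := d_N²/(2θ)`. -/
def dCap (n : ℕ) (θ : ℝ) (ξ : Euc n) : ℝ := distToTop n θ ξ ^ 2 / (2 * θ)

section helpers
open scoped ContDiff
open Filter Topology

section abstractPart
set_option linter.unusedSectionVars false
variable {E : Type*} [NormedAddCommGroup E] [InnerProductSpace ℝ E] [FiniteDimensional ℝ E]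
  [CompleteSpace E]

theorem aux_grad_contDiffAt {u : E → ℝ} {x : E} (hu : ContDiffAt ℝ ∞ u x) :
    ContDiffAt ℝ ∞ (gradient u) x := by
  have h1 : ContDiffAt ℝ ∞ (fderiv ℝ u) x := hu.fderiv_right (by simp)
  exact ((InnerProductSpace.toDual ℝ E).symm.toContinuousLinearEquiv.contDiff.contDiffAt).comp x h1

theorem aux_hess_contDiffAt {u : E → ℝ} {x : E} (hu : ContDiffAt ℝ ∞ u x) :
    ContDiffAt ℝ ∞ (fderiv ℝ (gradient u)) x :=
  (aux_grad_contDiffAt hu).fderiv_right (by simp)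

/-- smooth at all points near `x` -/
def SmNear (u : E → ℝ) (x : E) : Prop := ∀ᶠ y in 𝓝 x, ContDiffAt ℝ ∞ u y

theorem aux_hess_symm {u : E → ℝ} {x : E} (hu : ContDiffAt ℝ ∞ u x) (Y Z : E) :
    ⟪fderiv ℝ (gradient u) x Y, Z⟫ = ⟪Y, fderiv ℝ (gradient u) x Z⟫ := by
  have hs := (hu.isSymmSndFDerivAt (by simpa using (WithTop.coe_le_coe.2 le_top : ((2:ℕ∞):WithTop ℕ∞) ≤ ((⊤:ℕ∞):WithTop ℕ∞)))).eq Y Z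
  have hd : DifferentiableAt ℝ (gradient u) x := (aux_grad_contDiffAt hu).differentiableAt (by simp)
  have key : ∀ Y Z : E, fderiv ℝ (fderiv ℝ u) x Y Z = ⟪fderiv ℝ (gradient u) x Y, Z⟫ := by
    intro Y Z
    have : fderiv ℝ u = fun y => (InnerProductSpace.toDual ℝ E) (gradient u y) := by
      funext y; simp
    rw [this]
    have h2 := ((InnerProductSpace.toDual ℝ E).toContinuousLinearEquiv.hasFDerivAt.comp x hd.hasFDerivAt).fderiv
    have h3 : fderiv ℝ (fun y => (InnerProductSpace.toDual ℝ E) (gradient u y)) x Y Z = _ := 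
      congrArg (fun L => L Y Z) h2
    rw [h3]; rfl
  rw [key, key] at hs
  rw [hs, real_inner_comm]

theorem aux_second_test {F F' : ℝ → ℝ} {F'' : ℝ} (hF : ∀ᶠ s in 𝓝 0, HasDerivAt F (F' s) s)
    (hF' : HasDerivAt F' F'' 0) (hmax : IsLocalMax F 0) : F'' ≤ 0 := by
  by_contra hcon
  push Not at hcon
  have e1 : deriv F =ᶠ[𝓝 0] F' := hF.mono fun s hs => hs.deriv
  have e2 : deriv (deriv F) 0 = F'' := by rw [e1.deriv_eq]; exact hF'.deriv
  have hmin := isLocalMin_of_deriv_deriv_pos (by rw [e2]; exact hcon) hmax.deriv_eq_zero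
    hF.self_of_nhds.continuousAt
  have hc : F =ᶠ[𝓝 0] fun _ => F 0 := by
    filter_upwards [hmax, hmin] with s h1 h2 using le_antisymm h1 h2
  have e3 : deriv F =ᶠ[𝓝 0] fun _ => 0 := by
    have := hc.deriv
    filter_upwards [this] with s hs
    rw [hs]; simp
  have : deriv (deriv F) 0 = 0 := by rw [e3.deriv_eq]; simp
  linarith

theorem aux_curve {x Y : E} (hx : ‖x‖ = 1) (hY : ⟪x, Y⟫ = 0) :
    ∃ γ γ' : ℝ → E, γ 0 = x ∧ γ' 0 = Y ∧ (∀ s, ‖γ s‖ = 1) ∧ (∀ s, HasDerivAt γ (γ' s) s) ∧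
      HasDerivAt γ' (-(‖Y‖ ^ 2) • x) 0 ∧ (∀ s, ∃ a b : ℝ, γ s = a • x + b • Y) := by
  by_cases h0 : Y = 0
  · refine ⟨fun _ => x, fun _ => 0, rfl, h0.symm, fun _ => hx, fun s => hasDerivAt_const s x, ?_,
      fun s => ⟨1, 0, by simp⟩⟩
    simpa [h0] using hasDerivAt_const (0:ℝ) (0:E)
  have hr : ‖Y‖ ≠ 0 := norm_ne_zero_iff.mpr h0
  set r := ‖Y‖ with hrd
  refine ⟨fun s => Real.cos (r * s) • x + (Real.sin (r * s) / r) • Y,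
    fun s => (-(r * Real.sin (r * s))) • x + Real.cos (r * s) • Y, by simp, by simp, ?_, ?_, ?_,
    fun s => ⟨_, _, rfl⟩⟩
  · intro s
    have : ‖Real.cos (r * s) • x + (Real.sin (r * s) / r) • Y‖ ^ 2 = 1 := by
      rw [norm_add_sq_real, inner_smul_left, inner_smul_right, hY, norm_smul, norm_smul, hx, ← hrd]
      simp only [Real.norm_eq_abs, mul_pow, sq_abs]
      field_simp
      have := Real.sin_sq_add_cos_sq (r * s)
      linear_combination r * this
    nlinarith [norm_nonneg (Real.cos (r * s) • x + (Real.sin (r * s) / r) • Y)]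
  · intro s
    have hl : HasDerivAt (fun s : ℝ => r * s) r s := by simpa using (hasDerivAt_id s).const_mul r
    have h1 := (hl.cos.smul_const x).add ((hl.sin.div_const r).smul_const Y)
    refine h1.congr_deriv ?_
    rw [mul_div_assoc, div_self hr, mul_one]; congr 2; ring
  · have hl : HasDerivAt (fun s : ℝ => r * s) r 0 := by simpa using (hasDerivAt_id (0:ℝ)).const_mul r
    have h1 := (((hl.sin.const_mul r).neg).smul_const x).add (hl.cos.smul_const Y)
    refine h1.congr_deriv ?_
    simp [sq]

/-- derivative of `u` along a curve -/
theorem aux_along {u : E → ℝ} {γ : ℝ → E} {γ' : E} {s : ℝ} (hu : DifferentiableAt ℝ u (γ s))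
    (hγ : HasDerivAt γ γ' s) : HasDerivAt (fun s => u (γ s)) ⟪gradient u (γ s), γ'⟫ s := by
  have := hu.hasFDerivAt.comp_hasDerivAt s hγ
  rwa [inner_gradient_left]

theorem aux_third_symm {u : E → ℝ} {x : E} (hu : SmNear u x) (Y Z : E) :
    ⟪fderiv ℝ (fderiv ℝ (gradient u)) x Y Y, Z⟫ = ⟪fderiv ℝ (fderiv ℝ (gradient u)) x Z Y, Y⟫ := by
  have hx := hu.self_of_nhds
  have hs := ((aux_grad_contDiffAt hx).isSymmSndFDerivAt (by simpa using (WithTop.coe_le_coe.2 le_top : ((2:ℕ∞):WithTop ℕ∞) ≤ ((⊤:ℕ∞):WithTop ℕ∞)))).eq Y Z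
  have hd : HasFDerivAt (fderiv ℝ (gradient u)) _ x :=
    ((aux_hess_contDiffAt hx).differentiableAt (by simp)).hasFDerivAt
  have hd' : ∀ V W : E, HasFDerivAt (fun y => ⟪fderiv ℝ (gradient u) y V, W⟫) _ x := fun V W =>
    (hd.clm_apply (hasFDerivAt_const V x)).inner ℝ (hasFDerivAt_const W x)
  have e : (fun y => ⟪fderiv ℝ (gradient u) y Y, Z⟫) =ᶠ[𝓝 x]
      (fun y => ⟪fderiv ℝ (gradient u) y Z, Y⟫) := by
    filter_upwards [hu] with y hy
    rw [aux_hess_symm hy, real_inner_comm]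
  have h1 := congrArg (fun L => L Y) (((hd' Y Z).congr_of_eventuallyEq e.symm).unique (hd' Z Y))
  simp at h1
  rw [h1, hs]

theorem homog_inner {w : E → ℝ} (hw : ∀ r : ℝ, 0 < r → ∀ y, w (r • y) = w y) {y : E}
    (hd : DifferentiableAt ℝ w y) : ⟪gradient w y, y⟫ = 0 := by
  have hγ : HasDerivAt (fun s : ℝ => (1 + s) • y) y 0 := by
    simpa using (((hasDerivAt_id (0:ℝ)).const_add 1).smul_const y)
  have h1 := aux_along (u := w) (s := 0) (by simpa using hd) hγ
  have e : (fun s : ℝ => w ((1 + s) • y)) =ᶠ[𝓝 0] fun _ => w y := by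
    filter_upwards [Ioi_mem_nhds (show (-1:ℝ) < 0 by norm_num)] with s hs
    exact hw _ (by simp at hs; linarith) y
  have h2 := h1.unique ((hasDerivAt_const (0:ℝ) (w y)).congr_of_eventuallyEq e)
  simpa using h2

theorem homog_hess {w : E → ℝ} (hw : ∀ r : ℝ, 0 < r → ∀ y, w (r • y) = w y) {x : E}
    (hs : SmNear w x) : fderiv ℝ (gradient w) x x = - gradient w x := by
  have hx := hs.self_of_nhds
  have hd := ((aux_grad_contDiffAt hx).differentiableAt (by simp)).hasFDerivAt
  have h1 := hd.inner ℝ (hasFDerivAt_id x)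
  have e : (fun y => ⟪gradient w y, id y⟫) =ᶠ[𝓝 x] fun _ => 0 := by
    filter_upwards [hs] with y hy
    exact homog_inner hw (hy.differentiableAt (by simp))
  have h2 := h1.unique ((hasFDerivAt_const (0:ℝ) x).congr_of_eventuallyEq e)
  refine ext_inner_left ℝ fun Y => ?_
  have h3 := congrArg (fun L => L Y) h2
  simp [-inner_gradient_left] at h3
  rw [← aux_hess_symm hx, inner_neg_right, real_inner_comm _ Y]
  linarith

theorem homog_grad {w : E → ℝ} (hw : ∀ r : ℝ, 0 < r → ∀ y, w (r • y) = w y) {r : ℝ} (hr : 0 < r)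
    (y : E) : gradient w (r • y) = r⁻¹ • gradient w y := by
  have h1 : (fun y => w (r • y)) = w := funext (hw r hr)
  have h2 := fderiv_comp_smul (𝕜 := ℝ) (f := w) (x := y) r
  rw [show (fun x => w (r • x)) = w from h1] at h2
  refine ext_inner_right ℝ fun Y => ?_
  rw [inner_smul_left, inner_gradient_left, inner_gradient_left, h2]
  simp
  field_simp

theorem max_first {w : E → ℝ} {x : E}
    (hs : SmNear w x) (hx : ‖x‖ = 1)
    (hmax : IsLocalMax (fun y => ‖y‖ ^ 2 * ‖gradient w y‖ ^ 2) x) :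
    fderiv ℝ (gradient w) x (gradient w x) = -(‖gradient w x‖ ^ 2) • x := by
  have hx' := hs.self_of_nhds
  have hd := ((aux_grad_contDiffAt hx').differentiableAt (by simp)).hasFDerivAt
  have h1 := (((hasFDerivAt_id x).norm_sq).mul hd.norm_sq)
  have h2 := hmax.hasFDerivAt_eq_zero h1
  refine ext_inner_right ℝ fun Y => ?_
  have h3 := congrArg (fun L => L Y) h2
  simp [hx] at h3
  rw [aux_hess_symm hx', inner_smul_left]
  simp
  linarith

theorem max_second {w : E → ℝ} {x : E}
    (hs : SmNear w x) (hx : ‖x‖ = 1)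
    (hmax : IsLocalMax (fun y => ‖y‖ ^ 2 * ‖gradient w y‖ ^ 2) x) (Y : E) :
    ‖gradient w x‖ ^ 2 * ‖Y‖ ^ 2 - 3 * ‖gradient w x‖ ^ 2 * ⟪x, Y⟫ ^ 2
      + ⟪fderiv ℝ (fderiv ℝ (gradient w)) x (gradient w x) Y, Y⟫ ≤ 0 := by
  have hx' := hs.self_of_nhds
  have hline : ∀ s : ℝ, HasDerivAt (fun s : ℝ => x + s • Y) Y s := fun s => by
    simpa using ((hasDerivAt_id s).smul_const Y).const_add x
  have hcont : Tendsto (fun s : ℝ => x + s • Y) (𝓝 0) (𝓝 x) := by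
    have := (hline 0).continuousAt.tendsto
    simpa using this
  have hgl : ∀ᶠ s in 𝓝 (0:ℝ), HasDerivAt (fun s : ℝ => gradient w (x + s • Y))
      (fderiv ℝ (gradient w) (x + s • Y) Y) s := by
    filter_upwards [hcont.eventually hs] with s hy
    exact ((aux_grad_contDiffAt hy).differentiableAt (by simp)).hasFDerivAt.comp_hasDerivAt s (hline s)
  have hHl : HasDerivAt (fun s : ℝ => fderiv ℝ (gradient w) (x + s • Y) Y)
      (fderiv ℝ (fderiv ℝ (gradient w)) x Y Y) 0 := by
    have h0 : HasFDerivAt (fderiv ℝ (gradient w)) (fderiv ℝ (fderiv ℝ (gradient w)) x)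
        (x + (0:ℝ) • Y) := by
      simpa using ((aux_hess_contDiffAt hx').differentiableAt (by simp)).hasFDerivAt
    have h1 := h0.comp_hasDerivAt 0 (hline 0)
    simpa using h1.clm_apply (hasDerivAt_const (0:ℝ) Y)
  have hF : ∀ᶠ s in 𝓝 (0:ℝ), HasDerivAt
      (fun s : ℝ => ‖x + s • Y‖ ^ 2 * ‖gradient w (x + s • Y)‖ ^ 2)
      (2 * ⟪x + s • Y, Y⟫ * ‖gradient w (x + s • Y)‖ ^ 2 + ‖x + s • Y‖ ^ 2 *
        (2 * ⟪gradient w (x + s • Y), fderiv ℝ (gradient w) (x + s • Y) Y⟫)) s := by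
    filter_upwards [hgl] with s hy
    exact (hline s).norm_sq.mul hy.norm_sq
  have hg0 := hgl.self_of_nhds
  have hF' := ((((hline 0).inner ℝ (hasDerivAt_const (0:ℝ) Y)).const_mul 2).mul hg0.norm_sq).add
    ((hline 0).norm_sq.mul ((hg0.inner ℝ hHl).const_mul 2))
  have hm : IsLocalMax (fun s : ℝ => ‖x + s • Y‖ ^ 2 * ‖gradient w (x + s • Y)‖ ^ 2) 0 := by
    have := hcont.eventually hmax
    filter_upwards [this] with s h
    simpa using h
  have key := aux_second_test hF hF' hm
  have h3 := max_first hs hx hmax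
  have h4 : ⟪gradient w x, fderiv ℝ (gradient w) x Y⟫ = -(‖gradient w x‖ ^ 2) * ⟪x, Y⟫ := by
    rw [← aux_hess_symm hx', h3, inner_smul_left]; simp
  have h5 := aux_third_symm hs Y (gradient w x)
  simp [hx, h4, -inner_gradient_left, -inner_gradient_right] at key
  rw [← h5]
  have h6 : ‖gradient w x‖ ^ 2 * ⟪x, Y⟫ ^ 2 ≤ ‖fderiv ℝ (gradient w) x Y‖ ^ 2 := by
    by_cases ht : ‖gradient w x‖ = 0
    · rw [ht]; simp
    have hc := abs_real_inner_le_norm (gradient w x) (fderiv ℝ (gradient w) x Y)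
    rw [h4] at hc
    have hc2 : ‖gradient w x‖ * |⟪x, Y⟫| ≤ ‖fderiv ℝ (gradient w) x Y‖ := by
      have h7 : |-(‖gradient w x‖ ^ 2) * ⟪x, Y⟫| = ‖gradient w x‖ * (‖gradient w x‖ * |⟪x, Y⟫|) := by
        rw [abs_mul, abs_neg, abs_of_nonneg (by positivity)]; ring
      rw [h7] at hc
      exact le_of_mul_le_mul_left hc (lt_of_le_of_ne (norm_nonneg _) (Ne.symm ht))
    calc _ = (‖gradient w x‖ * |⟪x, Y⟫|) ^ 2 := by rw [mul_pow, sq_abs]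
      _ ≤ _ := by gcongr
  have h8 : ⟪gradient w x, fderiv ℝ (fderiv ℝ (gradient w)) x Y Y⟫ =
     ⟪fderiv ℝ (fderiv ℝ (gradient w)) x Y Y, gradient w x⟫ := real_inner_comm _ _
  have h9 : ⟪Y, x⟫ = ⟪x, Y⟫ := real_inner_comm _ _
  simp only [h8, h9] at key
  nlinarith

theorem jacobi {ι : Type*} [Fintype ι] [DecidableEq ι] (b : OrthonormalBasis ι ℝ E)
    {A : ℝ → E →L[ℝ] E} {A' : ι → ι → ℝ}
    (hent : ∀ i j, HasDerivAt (fun s => ⟪b i, A s (b j)⟫) (A' i j) 0) {lam : ι → ℝ}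
    (hlam : ∀ i, lam i ≠ 0) (heig : ∀ i, A 0 (b i) = lam i • b i) :
    HasDerivAt (fun s => LinearMap.det (A s).toLinearMap)
      ((∏ i, lam i) * ∑ i, (lam i)⁻¹ * A' i i) 0 := by
  have hM : ∀ s, LinearMap.det (A s).toLinearMap = ∑ σ : Equiv.Perm ι,
      (Equiv.Perm.sign σ : ℝ) * ∏ i, ⟪b (σ i), A s (b i)⟫ := by
    intro s
    rw [← LinearMap.det_toMatrix b.toBasis, Matrix.det_apply]
    refine Finset.sum_congr rfl fun σ _ => ?_
    rw [Units.smul_def, zsmul_eq_mul]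
    congr 1
    refine Finset.prod_congr rfl fun i _ => ?_
    simp [LinearMap.toMatrix_apply, OrthonormalBasis.repr_apply_apply]
  have hM0 : ∀ i j, ⟪b i, A 0 (b j)⟫ = if i = j then lam j else 0 := by
    intro i j
    rw [heig, inner_smul_right, orthonormal_iff_ite.1 b.orthonormal]
    simp
  have hsum : HasDerivAt (fun s => ∑ σ : Equiv.Perm ι,
      (Equiv.Perm.sign σ : ℝ) * ∏ i, ⟪b (σ i), A s (b i)⟫)
      (∑ σ : Equiv.Perm ι, (Equiv.Perm.sign σ : ℝ) * ∑ i, (∏ j ∈ Finset.univ.erase i,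
        ⟪b (σ j), A 0 (b j)⟫) • A' (σ i) i) 0 :=
    HasDerivAt.fun_sum fun σ _ => (HasDerivAt.fun_finsetProd fun i _ => hent (σ i) i).const_mul _
  rw [funext hM]
  refine hsum.congr_deriv ?_
  rw [Finset.sum_eq_single 1]
  · simp only [Equiv.Perm.sign_one, Units.val_one, Int.cast_one, one_mul, Equiv.Perm.coe_one, id,
      hM0, if_true, smul_eq_mul]
    rw [Finset.mul_sum]
    refine Finset.sum_congr rfl fun i _ => ?_
    rw [← Finset.mul_prod_erase _ _ (Finset.mem_univ i)]
    field_simp [hlam i]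
  · intro σ _ hσ
    rw [Finset.sum_eq_zero, mul_zero]
    intro i _
    have : ∃ j, j ≠ i ∧ σ j ≠ j := by
      by_contra hcon
      push Not at hcon
      apply hσ
      ext j
      by_cases hji : j = i
      · by_contra hne
        have h1 : σ i ≠ i := by simpa [hji] using hne
        have h2 := hcon _ h1
        exact h1 (σ.injective h2)
      · simp [hcon j hji]
    obtain ⟨j, hj, hj2⟩ := this
    rw [Finset.prod_eq_zero (i := j) (by simp [hj]) (by rw [hM0, if_neg hj2]), zero_smul]
  · simp

end abstractPart
section abstractPart
set_option linter.unusedSectionVars false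
variable {E : Type*} [NormedAddCommGroup E] [InnerProductSpace ℝ E] [FiniteDimensional ℝ E]
  [CompleteSpace E]

theorem linalg_eig {n : ℕ} (hfr : Module.finrank ℝ E = n + 1) (A : E →L[ℝ] E)
    (hsym : ∀ Y Z, ⟪A Y, Z⟫ = ⟪Y, A Z⟫) (hpos : ∀ Y, Y ≠ 0 → 0 < ⟪A Y, Y⟫) {x : E}
    (hx : ‖x‖ = 1) (hAx : A x = x) :
    ∃ (b : OrthonormalBasis (Fin (n + 1)) ℝ E) (lam : Fin (n + 1) → ℝ) (τ : ℝ),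
      (∀ i, 0 < lam i) ∧ (∀ i, A (b i) = lam i • b i) ∧
      LinearMap.det A.toLinearMap = ∏ i, lam i ∧ 0 ≤ τ ∧ ∑ i, (lam i)⁻¹ = 1 + τ ∧
      1 ≤ LinearMap.det A.toLinearMap * τ ^ n := by
  have hS : A.toLinearMap.IsSymmetric := fun Y Z => hsym Y Z
  let b := hS.eigenvectorBasis hfr
  let lam := hS.eigenvalues hfr
  have heig : ∀ i, A (b i) = lam i • b i := fun i => hS.apply_eigenvectorBasis hfr i
  have hlam : ∀ i, 0 < lam i := by
    intro i
    have h1 := hpos (b i) (b.orthonormal.ne_zero i)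
    rw [heig, inner_smul_left] at h1
    simpa using h1
  have hdet : LinearMap.det A.toLinearMap = ∏ i, lam i := by
    simpa using hS.det_eq_prod_eigenvalues hfr
  have hk : ∃ k, ⟪b k, x⟫ ≠ 0 := by
    by_contra hcon
    push Not at hcon
    have : x = 0 := by
      rw [← b.sum_repr x]
      simp [OrthonormalBasis.repr_apply_apply, hcon]
    rw [this] at hx; simp at hx
  obtain ⟨k, hk⟩ := hk
  have hlk : lam k = 1 := by
    have h1 := hsym (b k) x
    rw [hAx, heig, inner_smul_left] at h1
    simp only [RCLike.conj_to_real] at h1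
    exact mul_right_cancel₀ hk (h1.trans (one_mul _).symm)
  have hsum : ∑ i, (lam i)⁻¹ = 1 + ∑ i ∈ Finset.univ.erase k, (lam i)⁻¹ := by
    rw [← Finset.add_sum_erase _ _ (Finset.mem_univ k), hlk, inv_one]
  have hnn : 0 ≤ ∑ i ∈ Finset.univ.erase k, (lam i)⁻¹ :=
    Finset.sum_nonneg fun i _ => (inv_pos.2 (hlam i)).le
  refine ⟨b, lam, _, hlam, heig, hdet, hnn, hsum, ?_⟩
  have h1 : ∏ i ∈ Finset.univ.erase k, (lam i)⁻¹ ≤ (∑ i ∈ Finset.univ.erase k, (lam i)⁻¹) ^ n := by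
    have h2 := Finset.prod_le_prod (s := Finset.univ.erase k) (f := fun i => (lam i)⁻¹)
      (g := fun _ => ∑ i ∈ Finset.univ.erase k, (lam i)⁻¹)
      (fun i _ => (inv_pos.2 (hlam i)).le)
      (fun i hi => Finset.single_le_sum (f := fun i => (lam i)⁻¹)
        (fun i _ => (inv_pos.2 (hlam i)).le) hi)
    rw [Finset.prod_const, Finset.card_erase_of_mem (Finset.mem_univ k), Finset.card_univ,
      Fintype.card_fin, Nat.add_sub_cancel] at h2
    exact h2
  have h3 : 0 < ∏ i, lam i := Finset.prod_pos fun i _ => hlam i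
  have h4 : ∏ i ∈ Finset.univ.erase k, (lam i)⁻¹ = (∏ i, lam i)⁻¹ := by
    rw [← Finset.mul_prod_erase _ _ (Finset.mem_univ k), hlk, one_mul, Finset.prod_inv_distrib]
  rw [h4] at h1
  rw [hdet]
  calc (1:ℝ) = (∏ i, lam i) * (∏ i, lam i)⁻¹ := by field_simp
    _ ≤ _ := by gcongr

theorem linalg_Q {n : ℕ} {A : E →L[ℝ] E}
    (hsym : ∀ Y Z, ⟪A Y, Z⟫ = ⟪Y, A Z⟫) (b : OrthonormalBasis (Fin (n + 1)) ℝ E)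
    {lam : Fin (n + 1) → ℝ} (hlam : ∀ i, 0 < lam i) (heig : ∀ i, A (b i) = lam i • b i) (a c : E) :
    ∑ i, (lam i)⁻¹ * (⟪A a, b i⟫ * ⟪c, b i⟫) = ⟪a, c⟫ := by
  rw [← b.sum_inner_mul_inner a c]
  refine Finset.sum_congr rfl fun i _ => ?_
  rw [hsym, heig, inner_smul_right, real_inner_comm c]
  have := (hlam i).ne'
  field_simp

/-- The operator `H + N ⊗ N + 1 - x ⊗ x`. -/
def bigA (H : E →L[ℝ] E) (N x : E) : E →L[ℝ] E :=
  H + (innerSL ℝ N).smulRight N + ContinuousLinearMap.id ℝ E - (innerSL ℝ x).smulRight x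

theorem bigA_apply (H : E →L[ℝ] E) (N x Y : E) :
    bigA H N x Y = H Y + ⟪N, Y⟫ • N + Y - ⟪x, Y⟫ • x := by
  simp [bigA]

set_option maxHeartbeats 1000000 in
theorem interior_key {n : ℕ} (hfr : Module.finrank ℝ E = n + 1) {w ψ f : E → ℝ} {x : E}
    (hx : ‖x‖ = 1) (hsw : SmNear w x) (hsψ : SmNear ψ x)
    (hw : ∀ r : ℝ, 0 < r → ∀ y, w (r • y) = w y) (hψ : ∀ r : ℝ, 0 < r → ∀ y, ψ (r • y) = ψ y)
    (hmax : IsLocalMax (fun y => ‖y‖ ^ 2 * ‖gradient w y‖ ^ 2) x)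
    {φ C3 p q : ℝ} (hφ : 0 ≤ φ)
    (hHψ : ∀ Y, ⟪x, Y⟫ = 0 → fderiv ℝ (gradient ψ) x Y = φ • Y - ⟪gradient ψ x, Y⟫ • x)
    (hTψ : ∀ Y Z, |⟪fderiv ℝ (fderiv ℝ (gradient ψ)) x Z Y, Y⟫| ≤ C3 * ‖Z‖ * ‖Y‖ ^ 2)
    (hpos : ∀ Y, Y ≠ 0 → 0 < ⟪bigA (fderiv ℝ (gradient w) x + fderiv ℝ (gradient ψ) x)
      (x + (gradient w x + gradient ψ x)) x Y, Y⟫)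
    (hf : DifferentiableAt ℝ f x) (hf0 : 0 < f x)
    (heq : ∀ᶠ y in 𝓝 x, ‖y‖ = 1 →
      LinearMap.det (bigA (fderiv ℝ (gradient w) y + fderiv ℝ (gradient ψ) y)
      (y + (gradient w y + gradient ψ y)) y).toLinearMap =
      f y * Real.exp ((p - q) * (w y + ψ y)) *
        (1 + ‖gradient w y + gradient ψ y‖ ^ 2) ^ (((n : ℝ) + 1 - q) / 2)) :
    ∃ τ Qgk D : ℝ, 0 ≤ τ ∧ ⟪gradient w x + gradient ψ x, gradient w x⟫ * Qgk ≤ ‖gradient w x‖ ^ 2 ∧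
      ‖gradient w x‖ ^ 2 * τ + (⟪gradient f x, gradient w x⟫ / f x
        + (p - q) * ⟪gradient w x + gradient ψ x, gradient w x⟫
        + ((n : ℝ) + 1 - q) * (φ * ⟪gradient w x + gradient ψ x, gradient w x⟫) /
          (1 + ‖gradient w x + gradient ψ x‖ ^ 2))
        - C3 * ‖gradient w x‖ * (1 + τ) - 2 * (1 + φ) * Qgk
        + 2 * ⟪gradient ψ x, gradient w x⟫ ≤ 0 ∧ 1 ≤ D * τ ^ n ∧
      D = f x * Real.exp ((p - q) * (w x + ψ x)) *
        (1 + ‖gradient w x + gradient ψ x‖ ^ 2) ^ (((n : ℝ) + 1 - q) / 2) := by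
  have hxw := hsw.self_of_nhds
  have hxψ := hsψ.self_of_nhds
  have hg := homog_inner hw (hxw.differentiableAt (by simp))
  have hη := homog_inner hψ (hxψ.differentiableAt (by simp))
  have hHx := homog_hess hw hsw
  have hHψx := homog_hess hψ hsψ
  have hHg := max_first hsw hx hmax
  have hT := max_second hsw hx hmax
  have hsymw := aux_hess_symm hxw
  have hsymψ := aux_hess_symm hxψ
  have hgw : HasFDerivAt (gradient w) _ x :=
    ((aux_grad_contDiffAt hxw).differentiableAt (by simp)).hasFDerivAt
  have hgψ : HasFDerivAt (gradient ψ) _ x :=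
    ((aux_grad_contDiffAt hxψ).differentiableAt (by simp)).hasFDerivAt
  have hhw : HasFDerivAt (fderiv ℝ (gradient w)) _ x :=
    ((aux_hess_contDiffAt hxw).differentiableAt (by simp)).hasFDerivAt
  have hhψ : HasFDerivAt (fderiv ℝ (gradient ψ)) _ x :=
    ((aux_hess_contDiffAt hxψ).differentiableAt (by simp)).hasFDerivAt
  set g := gradient w x with hgdef
  set η := gradient ψ x with hηdef
  set Hw := fderiv ℝ (gradient w) x
  set Hψ := fderiv ℝ (gradient ψ) x
  set Tw := fderiv ℝ (fderiv ℝ (gradient w)) x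
  set Tψ := fderiv ℝ (fderiv ℝ (gradient ψ)) x
  set κ := ⟪g + η, g⟫ with hκ
  have hxx : ⟪x, x⟫ = 1 := by rw [real_inner_self_eq_norm_sq, hx]; norm_num
  have hxg : ⟪x, g⟫ = 0 := by rw [real_inner_comm]; exact hg
  have hxη : ⟪x, η⟫ = 0 := by rw [real_inner_comm]; exact hη
  have hκ2 : κ = ‖g‖ ^ 2 + ⟪η, g⟫ := by
    rw [hκ, inner_add_left, real_inner_self_eq_norm_sq]
  have hHψg := hHψ g hxg
  set A0 := bigA (Hw + Hψ) (x + (g + η)) x with hA0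
  have hA0sym : ∀ Y Z, ⟪A0 Y, Z⟫ = ⟪Y, A0 Z⟫ := by
    intro Y Z
    simp only [hA0, bigA_apply, _root_.add_apply, inner_add_left, inner_add_right,
      inner_sub_left, inner_sub_right, inner_smul_left, inner_smul_right, hsymw, hsymψ]
    simp only [RCLike.conj_to_real, real_inner_comm Y]
    ring
  have hA0x : A0 x = x := by
    simp only [hA0, bigA_apply, _root_.add_apply, hHx, hHψx, inner_add_left, hxx, hg, hη]
    simp
    abel
  have hA0g : A0 g = (1 + φ) • g + κ • (g + η) := by
    simp only [hA0, bigA_apply, _root_.add_apply, hHg, hHψg, inner_add_left, hxg, hκ2,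
      real_inner_self_eq_norm_sq]
    module
  obtain ⟨b, lam, τ, hlam, heig, hdet, hτ, hsumτ, hdetτ⟩ := linalg_eig hfr A0 hA0sym hpos hx hA0x
  obtain ⟨γ, γ', hγ0, hγ'0, hγn, hγd, -, -⟩ := aux_curve hx hxg
  have hγd0 : HasDerivAt γ g 0 := hγ'0 ▸ hγd 0
  rw [← hγ0] at hgw hgψ hhw hhψ
  have dw : HasDerivAt (fun s => gradient w (γ s)) (Hw g) 0 := hgw.comp_hasDerivAt 0 hγd0
  have dψ : HasDerivAt (fun s => gradient ψ (γ s)) (Hψ g) 0 := hgψ.comp_hasDerivAt 0 hγd0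
  have dHw : HasDerivAt (fun s => fderiv ℝ (gradient w) (γ s)) (Tw g) 0 := hhw.comp_hasDerivAt 0 hγd0
  have dHψ : HasDerivAt (fun s => fderiv ℝ (gradient ψ) (γ s)) (Tψ g) 0 := hhψ.comp_hasDerivAt 0 hγd0
  have dN := hγd0.add (dw.add dψ)
  set N' := g + (Hw g + Hψ g) with hN'
  have hN'2 : N' = (1 + φ) • g - κ • x := by
    rw [hN', hHg, hHψg, hκ2]; module
  have hent : ∀ i j, HasDerivAt (fun s => ⟪b i, bigA (fderiv ℝ (gradient w) (γ s) +
      fderiv ℝ (gradient ψ) (γ s)) (γ s + (gradient w (γ s) + gradient ψ (γ s))) (γ s) (b j)⟫)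
      (⟪b i, Tw g (b j)⟫ + ⟪b i, Tψ g (b j)⟫
        + (⟪N', b j⟫ * ⟪b i, x + (g + η)⟫ + ⟪x + (g + η), b j⟫ * ⟪b i, N'⟫)
        - (⟪g, b j⟫ * ⟪b i, x⟫ + ⟪x, b j⟫ * ⟪b i, g⟫)) 0 := by
    intro i j
    have e1 := (hasDerivAt_const (0:ℝ) (b i)).inner ℝ (dHw.clm_apply (hasDerivAt_const (0:ℝ) (b j)))
    have e2 := (hasDerivAt_const (0:ℝ) (b i)).inner ℝ (dHψ.clm_apply (hasDerivAt_const (0:ℝ) (b j)))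
    have e3 := (dN.inner ℝ (hasDerivAt_const (0:ℝ) (b j))).mul ((hasDerivAt_const (0:ℝ) (b i)).inner ℝ dN)
    have e4 := (hγd0.inner ℝ (hasDerivAt_const (0:ℝ) (b j))).mul ((hasDerivAt_const (0:ℝ) (b i)).inner ℝ hγd0)
    have e5 := (((e1.add e2).add e3).add_const ⟪b i, b j⟫).sub e4
    refine (e5.congr_deriv ?_).congr_of_eventuallyEq (Eventually.of_forall fun s => ?_)
    · simp [hγ0, -inner_gradient_left, -inner_gradient_right, ← hgdef, ← hηdef]
    · simp only [bigA_apply, _root_.add_apply, inner_add_right, inner_sub_right, 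
        inner_smul_right, Pi.add_apply, Pi.sub_apply, Pi.mul_apply]
  have hA00 : (fun s => bigA (fderiv ℝ (gradient w) (γ s) +
      fderiv ℝ (gradient ψ) (γ s)) (γ s + (gradient w (γ s) + gradient ψ (γ s))) (γ s)) 0 = A0 := by
    simp only [hγ0]; rfl
  have hJ := jacobi (lam := lam) b hent (fun i => (hlam i).ne') (fun i => by
    have h := heig i
    rw [← hA00] at h
    exact h)
  -- right-hand side
  set e : ℝ := ((n : ℝ) + 1 - q) / 2 with he
  set B : ℝ := 1 + ‖g + η‖ ^ 2 with hB
  have hBpos : 0 < B := by positivity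
  have df : HasDerivAt (fun s => f (γ s)) ⟪gradient f x, g⟫ 0 := by
    have := aux_along (u := f) (s := 0) (by rw [hγ0]; exact hf) hγd0
    rwa [hγ0] at this
  have dv : HasDerivAt (fun s => w (γ s) + ψ (γ s)) κ 0 := by
    have h1 := aux_along (u := w) (s := 0) (by rw [hγ0]; exact hxw.differentiableAt (by simp)) hγd0
    have h2 := aux_along (u := ψ) (s := 0) (by rw [hγ0]; exact hxψ.differentiableAt (by simp)) hγd0
    refine (h1.add h2).congr_deriv ?_
    rw [hγ0, hκ, inner_add_left]
  have hkH : ⟪g + η, Hw g + Hψ g⟫ = φ * κ := by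
    rw [hHg, hHψg]
    simp only [inner_add_right, inner_sub_right, inner_smul_right, inner_add_left, hg, hη, hκ]
    ring
  have dB : HasDerivAt (fun s => 1 + ‖gradient w (γ s) + gradient ψ (γ s)‖ ^ 2) (2 * (φ * κ)) 0 := by
    have h1 := ((dw.add dψ).norm_sq).const_add 1
    refine h1.congr_deriv ?_
    simp only [Pi.add_apply, hγ0]
    rw [← hkH]
  have dBe := dB.rpow_const (p := e) (Or.inl (by simp only [hγ0]; exact hBpos.ne'))
  have dR := (df.mul ((dv.const_mul (p - q)).exp)).mul dBe
  have hcont : Tendsto γ (𝓝 0) (𝓝 x) := by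
    have := hγd0.continuousAt.tendsto
    rwa [hγ0] at this
  have hR := hJ.unique (dR.congr_of_eventuallyEq (by
    filter_upwards [hcont.eventually heq] with s hs
    exact hs (hγn s)))
  have hdetx := (heq.self_of_nhds) hx
  have hAA : LinearMap.det A0.toLinearMap = f x * Real.exp ((p - q) * (w x + ψ x)) * B ^ e := hdetx
  refine ⟨τ, ∑ i, (lam i)⁻¹ * (⟪g + η, b i⟫ * ⟪g, b i⟫), LinearMap.det A0.toLinearMap, hτ, ?_, ?_, hdetτ, hAA⟩
  · have h1 := linalg_Q hA0sym b hlam heig g g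
    rw [hA0g, real_inner_self_eq_norm_sq] at h1
    have h2 : ∑ i, (lam i)⁻¹ * (⟪(1 + φ) • g + κ • (g + η), b i⟫ * ⟪g, b i⟫) =
      (1 + φ) * ∑ i, (lam i)⁻¹ * (⟪g, b i⟫ * ⟪g, b i⟫) + κ * ∑ i, (lam i)⁻¹ * (⟪g + η, b i⟫ * ⟪g, b i⟫) := by
      rw [Finset.mul_sum, Finset.mul_sum, ← Finset.sum_add_distrib]
      refine Finset.sum_congr rfl fun i _ => ?_
      rw [inner_add_left, inner_smul_left, inner_smul_left]
      simp only [RCLike.conj_to_real]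
      ring
    have h3 : 0 ≤ ∑ i, (lam i)⁻¹ * (⟪g, b i⟫ * ⟪g, b i⟫) :=
      Finset.sum_nonneg fun i _ => mul_nonneg (inv_pos.2 (hlam i)).le (mul_self_nonneg _)
    rw [h2] at h1
    nlinarith
  · have hRx : 0 < f x * Real.exp ((p - q) * (w x + ψ x)) * B ^ e := by positivity
    have hρ : ∑ i, (lam i)⁻¹ * (⟪b i, Tw g (b i)⟫ + ⟪b i, Tψ g (b i)⟫
        + (⟪N', b i⟫ * ⟪b i, x + (g + η)⟫ + ⟪x + (g + η), b i⟫ * ⟪b i, N'⟫)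
        - (⟪g, b i⟫ * ⟪b i, x⟫ + ⟪x, b i⟫ * ⟪b i, g⟫)) = 
        ⟪gradient f x, g⟫ / f x + (p - q) * κ + ((n : ℝ) + 1 - q) * (φ * κ) / B := by
      rw [← hdet, hAA] at hR
      refine mul_left_cancel₀ hRx.ne' (hR.trans ?_)
      simp only [hγ0, Pi.mul_apply]
      change _ + _ * (_ * _ * B ^ (e - 1)) = _
      rw [Real.rpow_sub_one hBpos.ne', show ((n:ℝ) + 1 - q) = 2 * e by rw [he]; ring]
      change (_ * _ + _ * _) * B ^ e + _ = _
      field_simp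
    have hQx : ∀ c, ∑ i, (lam i)⁻¹ * (⟪x, b i⟫ * ⟪c, b i⟫) = ⟪x, c⟫ := by
      intro c
      have := linalg_Q hA0sym b hlam heig x c
      rwa [hA0x] at this
    have hterm : ∀ i, (lam i)⁻¹ * (⟪b i, Tw g (b i)⟫ + ⟪b i, Tψ g (b i)⟫
        + (⟪N', b i⟫ * ⟪b i, x + (g + η)⟫ + ⟪x + (g + η), b i⟫ * ⟪b i, N'⟫)
        - (⟪g, b i⟫ * ⟪b i, x⟫ + ⟪x, b i⟫ * ⟪b i, g⟫)) ≤
        (C3 * ‖g‖ - ‖g‖ ^ 2) * (lam i)⁻¹ + 3 * ‖g‖ ^ 2 * ((lam i)⁻¹ * (⟪x, b i⟫ * ⟪x, b i⟫))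
        + 2 * (1 + φ) * ((lam i)⁻¹ * (⟪g + η, b i⟫ * ⟪g, b i⟫))
        + 2 * φ * ((lam i)⁻¹ * (⟪x, b i⟫ * ⟪g, b i⟫)) 
        - 2 * κ * ((lam i)⁻¹ * (⟪x, b i⟫ * ⟪x + (g + η), b i⟫)) := by
      intro i
      have h1 := hT (b i)
      have h2 := (abs_le.1 (hTψ (b i) g)).2
      rw [b.orthonormal.1 i] at h1 h2
      have h3 := (inv_pos.2 (hlam i))
      rw [real_inner_comm, real_inner_comm (Tψ g (b i)), real_inner_comm _ (b i), 
        real_inner_comm _ (b i), real_inner_comm _ (b i), real_inner_comm _ (b i), hN'2] 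
      simp only [inner_sub_left, inner_smul_left, inner_add_left, RCLike.conj_to_real] at h1 ⊢
      have h4 := mul_le_mul_of_nonneg_left (add_le_add h1 h2) h3.le
      linear_combination h4
    have htot := Finset.sum_le_sum fun i (_ : i ∈ Finset.univ) => hterm i
    rw [hρ] at htot
    simp only [Finset.sum_add_distrib, Finset.sum_sub_distrib, ← Finset.mul_sum, hQx, hsumτ, hxx, hxg,
      inner_add_right, hxη] at htot
    linear_combination htot - 2 * hκ2
end abstractPart

set_option maxHeartbeats 1000000 in
theorem numeric_bound (n : ℕ) (p q a C3 m K : ℝ) (hq : 1 < q) (hpq : q ≤ p) (ha : 0 ≤ a)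
    (hC3 : 0 ≤ C3) (hm : 0 < m) :
    ∃ C : ℝ, 0 < C ∧ ∀ t r κ φ ζ F f0 τ Q D v : ℝ, 0 ≤ t → 0 ≤ r → |ζ| ≤ a * t → κ = t ^ 2 + ζ →
      t - a ≤ r → r ≤ t + a → 0 ≤ φ → φ ≤ a → |F| ≤ K * t → m ≤ f0 → f0 ≤ K → 0 ≤ τ →
      κ * Q ≤ t ^ 2 →
      t ^ 2 * τ + (F / f0 + (p - q) * κ + ((n : ℝ) + 1 - q) * (φ * κ) / (1 + r ^ 2))
        - C3 * t * (1 + τ) - 2 * (1 + φ) * Q + 2 * ζ ≤ 0 →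
      1 ≤ D * τ ^ n →
      D = f0 * Real.exp ((p - q) * v) * (1 + r ^ 2) ^ (((n : ℝ) + 1 - q) / 2) → t ≤ C := by
  set C4 : ℝ := |(n : ℝ) + 1 - q| * (8 * a) with hC4
  set M : ℝ := |K| / m + C4 + C3 + 4 * (1 + a) + 2 * a with hM
  have hM0 : 0 ≤ M := by positivity
  set L : ℝ := 3 ^ n * |K| * (2 * M) ^ n with hL
  have hL0 : 0 ≤ L := by positivity
  refine ⟨1 + 2 * a + 2 * C3 + |2 * M / (p - q)| + 2 * L ^ (1 / (q - 1)), by positivity, ?_⟩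
  intro t r κ φ ζ F f0 τ Q D v ht hr hζ hκ hr1 hr2 hφ0 hφ hF hf1 hf2 hτ hQ hmain hD hDe
  have hLp : 0 ≤ L ^ (1 / (q - 1)) := by positivity
  have habs := abs_nonneg (2 * M / (p - q))
  by_contra hcon
  push Not at hcon
  have t1 : 1 ≤ t := by linarith
  have t2 : 2 * a ≤ t := by linarith
  have t3 : 2 * C3 ≤ t := by linarith
  have ⟨z1, z2⟩ := abs_le.1 hζ
  have hat : a * t ≤ t ^ 2 / 2 := by nlinarith only [t1, t2]
  have k1 : t ^ 2 / 2 ≤ κ := by linarith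
  have k2 : κ ≤ 2 * t ^ 2 := by nlinarith only [hκ, z2, hat]
  have k0 : 0 < κ := by nlinarith only [k1, t1]
  have hr3 : t / 2 ≤ r := by linarith
  have hr4 : t ^ 2 / 4 ≤ 1 + r ^ 2 := by nlinarith only [hr3, t1]
  have hK : |K| = K := abs_of_pos (by linarith)
  have hQ2 : Q ≤ 2 := by
    by_contra h
    push Not at h
    nlinarith only [h, hQ, k1, k0, mul_pos k0 (sub_pos.2 h)]
  have hF2 : -(|K| / m * t) ≤ F / f0 := by
    have hf0 : 0 < f0 := by linarith
    rw [← neg_le_neg_iff, neg_neg, ← neg_div, div_le_iff₀ hf0]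
    have h1 := (abs_le.1 hF).1
    have h2 : K * t ≤ |K| / m * t * f0 := by
      rw [hK]
      have h3 : 0 ≤ K / m * t := by
        have : 0 < K := by linarith
        positivity
      calc K * t = K / m * t * m := by field_simp
        _ ≤ _ := by gcongr
    linarith
  have hfr : 0 ≤ φ * κ / (1 + r ^ 2) ∧ φ * κ / (1 + r ^ 2) ≤ 8 * a := by
    refine ⟨by positivity, ?_⟩
    rw [div_le_iff₀ (by positivity)]
    have h1 : φ * κ ≤ a * (2 * t ^ 2) := by gcongr
    have h2 : 8 * a * (t ^ 2 / 4) ≤ 8 * a * (1 + r ^ 2) := by gcongr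
    linarith
  have hfr2 : -C4 ≤ ((n : ℝ) + 1 - q) * (φ * κ) / (1 + r ^ 2) := by
    have h1 : |((n : ℝ) + 1 - q) * (φ * κ) / (1 + r ^ 2)| ≤ C4 := by
      rw [mul_div_assoc, abs_mul, abs_of_nonneg hfr.1]
      exact mul_le_mul_of_nonneg_left hfr.2 (abs_nonneg _)
    exact (abs_le.1 h1).1
  have hQ3 : 2 * (1 + φ) * Q ≤ 4 * (1 + a) := by
    have : (1 + φ) * Q ≤ (1 + φ) * 2 := by gcongr
    linarith
  have hC3t : C3 * t * τ ≤ t ^ 2 * τ / 2 := by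
    have : C3 * (t * τ) ≤ t / 2 * (t * τ) := by
      apply mul_le_mul_of_nonneg_right _ (by positivity)
      linarith
    linarith
  have hC40 : 0 ≤ C4 := by positivity
  have hkey : t ^ 2 * τ / 2 + (p - q) * (t ^ 2 / 2) ≤ M * t := by
    have h1 : (p - q) * (t ^ 2 / 2) ≤ (p - q) * κ :=
      mul_le_mul_of_nonneg_left k1 (by linarith)
    have h2 : C4 ≤ C4 * t := le_mul_of_one_le_right hC40 t1
    have h3 : 4 * (1 + a) ≤ 4 * (1 + a) * t := le_mul_of_one_le_right (by positivity) t1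
    have h4 : M * t = |K| / m * t + C4 * t + C3 * t + 4 * (1 + a) * t + 2 * a * t := by rw [hM]; ring
    rw [h4]
    linarith
  rcases eq_or_lt_of_le hpq with heq | hlt
  · subst heq
    simp only [sub_self, zero_mul, Real.exp_zero, mul_one, add_zero] at hkey hDe
    have hτt : t * τ ≤ 2 * M := by
      have : t * (t * τ) ≤ t * (2 * M) := by linarith
      exact le_of_mul_le_mul_left this (by linarith)
    set s := Real.sqrt (1 + r ^ 2) with hs
    have hs2 : s ^ 2 = 1 + r ^ 2 := Real.sq_sqrt (by positivity)
    have hs0 : 0 < s := by positivity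
    have hst : t / 2 ≤ s := by
      rw [hs]
      refine Real.le_sqrt_of_sq_le ?_
      linarith
    have hs3 : s ≤ 3 * t := by
      have : s ≤ 1 + r := by
        rw [hs, Real.sqrt_le_left (by linarith)]
        linarith
      linarith
    have hse : (1 + r ^ 2) ^ (((n : ℝ) + 1 - q) / 2) = s ^ ((n : ℝ) + 1 - q) := by
      rw [← hs2, ← Real.rpow_natCast, ← Real.rpow_mul hs0.le]
      congr 1; push_cast; ring
    rw [hse] at hDe
    have hsp : 0 < s ^ ((n : ℝ) + 1 - q) := by positivity
    have h1 : t ^ n ≤ K * s ^ ((n : ℝ) + 1 - q) * (2 * M) ^ n := by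
      calc t ^ n = t ^ n * 1 := by ring
        _ ≤ t ^ n * (D * τ ^ n) := by gcongr
        _ = D * (t * τ) ^ n := by ring
        _ ≤ (K * s ^ ((n : ℝ) + 1 - q)) * (2 * M) ^ n := by
            rw [hDe]
            have : 0 ≤ f0 := by linarith
            have : 0 ≤ K := by linarith
            gcongr
    have h2 : s ^ n ≤ L * s ^ ((n : ℝ) + 1 - q) := by
      calc s ^ n ≤ (3 * t) ^ n := by gcongr
        _ = 3 ^ n * t ^ n := by ring
        _ ≤ 3 ^ n * (K * s ^ ((n : ℝ) + 1 - q) * (2 * M) ^ n) := by gcongr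
        _ = _ := by rw [hL, hK]; ring
    have h3 : s ^ (q - 1) ≤ L := by
      have h4 : s ^ (q - 1) * s ^ ((n : ℝ) + 1 - q) = s ^ n := by
        rw [← Real.rpow_add hs0, ← Real.rpow_natCast]
        congr 1; ring
      rw [← h4] at h2
      exact le_of_mul_le_mul_right h2 hsp
    have h5 : s ≤ L ^ (1 / (q - 1)) := by
      have h6 := Real.rpow_le_rpow (by positivity) h3 (show 0 ≤ 1 / (q - 1) by
        apply div_nonneg <;> linarith)
      rwa [← Real.rpow_mul hs0.le, mul_one_div_cancel (by linarith), Real.rpow_one] at h6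
    linarith
  · have h0 : 0 < p - q := by linarith
    have h1 : (p - q) * t ≤ 2 * M := by
      have h2 : t * ((p - q) * t) ≤ t * (2 * M) := by
        have : 0 ≤ t ^ 2 * τ := by positivity
        linarith
      exact le_of_mul_le_mul_left h2 (by linarith)
    have h3 : t ≤ 2 * M / (p - q) := by
      rw [le_div_iff₀ h0]; linarith
    have := le_abs_self (2 * M / (p - q))
    linarith


section abstractPart
set_option linter.unusedSectionVars false
variable {E : Type*} [NormedAddCommGroup E] [InnerProductSpace ℝ E] [FiniteDimensional ℝ E]
  [CompleteSpace E]

theorem link_gen {u U : E → ℝ} {x : E} (hx : ‖x‖ = 1) (hsu : SmNear u x) (hsU : SmNear U x)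
    (hu : ∀ r : ℝ, 0 < r → ∀ y, u (r • y) = u y) (heq : ∀ y, ‖y‖ = 1 → u y = U y)
    {Y : E} (hY : ⟪x, Y⟫ = 0) :
    ⟪gradient u x, Y⟫ = ⟪gradient U x, Y⟫ ∧
    ⟪fderiv ℝ (gradient u) x Y, Y⟫ =
      ⟪fderiv ℝ (gradient U) x Y, Y⟫ - ⟪gradient U x, x⟫ * ‖Y‖ ^ 2 := by
  obtain ⟨γ, γ', hγ0, hγ'0, hγn, hγd, hγdd, -⟩ := aux_curve hx hY
  have hcont : Tendsto γ (𝓝 0) (𝓝 x) := by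
    have := (hγd 0).continuousAt.tendsto
    rwa [hγ0] at this
  have hfun : (fun s => u (γ s)) = fun s => U (γ s) := funext fun s => heq _ (hγn s)
  have h1 : ∀ᶠ s in 𝓝 (0:ℝ), ⟪gradient u (γ s), γ' s⟫ = ⟪gradient U (γ s), γ' s⟫ := by
    filter_upwards [hcont.eventually hsu, hcont.eventually hsU] with s hs hS
    have a1 := aux_along (hs.differentiableAt (by simp)) (hγd s)
    have a2 := aux_along (hS.differentiableAt (by simp)) (hγd s)
    rw [hfun] at a1
    exact a1.unique a2
  have h10 := h1.self_of_nhds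
  rw [hγ0, hγ'0] at h10
  refine ⟨h10, ?_⟩
  have key : ∀ {g : E → ℝ}, SmNear g x → HasDerivAt (fun s => ⟪gradient g (γ s), γ' s⟫)
      (⟪gradient g x, -(‖Y‖ ^ 2) • x⟫ + ⟪fderiv ℝ (gradient g) x Y, Y⟫) 0 := by
    intro g hg
    have hd := ((aux_grad_contDiffAt hg.self_of_nhds).differentiableAt (by simp)).hasFDerivAt
    rw [← hγ0] at hd
    have h2 := (hd.comp_hasDerivAt 0 (hγd 0)).inner ℝ hγdd
    refine h2.congr_deriv ?_
    simp only [Function.comp, hγ0, hγ'0]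
  have h2 := (key hsu).unique ((key hsU).congr_of_eventuallyEq h1)
  have h3 := homog_inner hu (hsu.self_of_nhds.differentiableAt (by simp))
  rw [inner_smul_right, inner_smul_right, h3] at h2
  linarith

/-- log of the support function, extended homogeneously -/
def vfun (c : E) (h : E → ℝ) : E → ℝ := fun y => Real.log (h (c + ‖y‖⁻¹ • y))

theorem vfun_homog (c : E) (h : E → ℝ) (r : ℝ) (hr : 0 < r) (y : E) :
    vfun c h (r • y) = vfun c h y := by
  unfold vfun
  rw [norm_smul, Real.norm_of_nonneg hr.le, smul_smul, mul_inv, mul_comm r⁻¹, mul_assoc,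
    inv_mul_cancel₀ hr.ne', mul_one]

theorem vfun_unit (c : E) (h : E → ℝ) {y : E} (hy : ‖y‖ = 1) :
    vfun c h y = Real.log (h (c + y)) := by
  unfold vfun; rw [hy]; simp

theorem aux_normalize {x : E} (hx : x ≠ 0) : ContDiffAt ℝ ∞ (fun y : E => ‖y‖⁻¹ • y) x :=
  ((contDiffAt_norm ℝ hx).inv (norm_ne_zero_iff.2 hx)).smul contDiffAt_id

theorem vfun_sm {c : E} {h : E → ℝ} (hh : ContDiff ℝ ∞ h) {x : E} (hx : ‖x‖ = 1)
    (hp : 0 < h (c + x)) : SmNear (vfun c h) x := by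
  have hx0 : x ≠ 0 := by rintro rfl; simp at hx
  have hc : ContinuousAt (fun y : E => h (c + ‖y‖⁻¹ • y)) x :=
    hh.continuous.continuousAt.comp (continuousAt_const.add (aux_normalize hx0).continuousAt)
  have h1 : ∀ᶠ y in 𝓝 x, 0 < h (c + ‖y‖⁻¹ • y) :=
    hc.eventually (lt_mem_nhds (by simpa [hx] using hp))
  filter_upwards [h1, isOpen_ne.mem_nhds hx0] with y hy hy0
  exact (hh.contDiffAt.comp y (contDiffAt_const.add (aux_normalize hy0))).log hy.ne'

/-- linear function, extended homogeneously -/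
def psi (a : ℝ) (e : E) : E → ℝ := fun y => a * ⟪e, ‖y‖⁻¹ • y⟫

theorem psi_homog (a : ℝ) (e : E) (r : ℝ) (hr : 0 < r) (y : E) :
    psi a e (r • y) = psi a e y := by
  unfold psi
  rw [norm_smul, Real.norm_of_nonneg hr.le, smul_smul, mul_inv, mul_comm r⁻¹, mul_assoc,
    inv_mul_cancel₀ hr.ne', mul_one]

theorem psi_cd (a : ℝ) (e : E) {x : E} (hx : x ≠ 0) : ContDiffAt ℝ ∞ (psi a e) x :=
  contDiffAt_const.mul (contDiffAt_const.inner ℝ (aux_normalize hx))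

theorem psi_sm (a : ℝ) (e : E) {x : E} (hx : ‖x‖ = 1) : SmNear (psi a e) x := by
  have hx0 : x ≠ 0 := by rintro rfl; simp at hx
  filter_upwards [isOpen_ne.mem_nhds hx0] with y hy
  exact psi_cd a e hy

theorem aux_polar {S : E →L[ℝ] E} (hS : ∀ Y Z, ⟪S Y, Z⟫ = ⟪Y, S Z⟫) {x : E}
    (h0 : ∀ Y, ⟪x, Y⟫ = 0 → ⟪S Y, Y⟫ = 0) {Y Z : E} (hY : ⟪x, Y⟫ = 0) (hZ : ⟪x, Z⟫ = 0) :
    ⟪S Y, Z⟫ = 0 := by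
  have h1 := h0 (Y + Z) (by rw [inner_add_right, hY, hZ, add_zero])
  have h2 := h0 Y hY
  have h3 := h0 Z hZ
  rw [map_add, inner_add_left, inner_add_right, inner_add_right, h2, h3, hS Z Y,
    real_inner_comm (S Y) Z] at h1
  linarith

theorem aux_decomp {x : E} (hx : ‖x‖ = 1) (Z : E) :
    ∃ Z' : E, ⟪x, Z'⟫ = 0 ∧ Z = ⟪x, Z⟫ • x + Z' := by
  refine ⟨Z - ⟪x, Z⟫ • x, ?_, by abel⟩
  rw [inner_sub_right, inner_smul_right, real_inner_self_eq_norm_sq, hx]; ring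

theorem psi_grad (a : ℝ) (e : E) {x : E} (hx : ‖x‖ = 1) :
    gradient (psi a e) x = a • (e - ⟪x, e⟫ • x) := by
  have hxx : ⟪x, x⟫ = 1 := by rw [real_inner_self_eq_norm_sq, hx]; norm_num
  have hU : ∀ y : E, HasGradientAt (fun y : E => a * ⟪e, y⟫) (a • e) y := by
    intro y
    rw [hasGradientAt_iff_hasFDerivAt]
    have := ((innerSL ℝ e).hasFDerivAt (x := y)).const_mul a
    refine this.congr_fderiv ?_
    ext Z; simp [inner_smul_left]
  have hsU : SmNear (fun y : E => a * ⟪e, y⟫) x := Eventually.of_forall fun y =>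
    contDiffAt_const.mul (contDiffAt_const.inner ℝ contDiffAt_id)
  have h0 := homog_inner (psi_homog a e) ((psi_sm a e hx).self_of_nhds.differentiableAt (by simp))
  refine ext_inner_right ℝ fun Z => ?_
  obtain ⟨Z', hZ', hZ⟩ := aux_decomp hx Z
  have h1 := (link_gen hx (psi_sm a e hx) hsU (psi_homog a e)
    (fun y hy => by simp [psi, hy]) hZ').1
  rw [(hU x).gradient] at h1
  rw [hZ, inner_add_right, inner_add_right, h1, inner_smul_right, h0, inner_smul_right]
  simp only [inner_smul_left, inner_sub_left, hxx, hZ', RCLike.conj_to_real, real_inner_comm x e]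
  ring

theorem psi_hess (a : ℝ) (e : E) {x : E} (hx : ‖x‖ = 1) {Y : E} (hY : ⟪x, Y⟫ = 0) :
    fderiv ℝ (gradient (psi a e)) x Y = (-(a * ⟪x, e⟫)) • Y - ⟪gradient (psi a e) x, Y⟫ • x := by
  have hxx : ⟪x, x⟫ = 1 := by rw [real_inner_self_eq_norm_sq, hx]; norm_num
  have hU : ∀ y : E, HasGradientAt (fun y : E => a * ⟪e, y⟫) (a • e) y := by
    intro y
    rw [hasGradientAt_iff_hasFDerivAt]
    have := ((innerSL ℝ e).hasFDerivAt (x := y)).const_mul a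
    refine this.congr_fderiv ?_
    ext Z; simp [inner_smul_left]
  have hgU : gradient (fun y : E => a * ⟪e, y⟫) = fun _ => a • e := funext fun y => (hU y).gradient
  have hsU : SmNear (fun y : E => a * ⟪e, y⟫) x := Eventually.of_forall fun y =>
    contDiffAt_const.mul (contDiffAt_const.inner ℝ contDiffAt_id)
  have hcd := (psi_sm a e hx).self_of_nhds
  have hsym := aux_hess_symm hcd
  have hHx := homog_hess (psi_homog a e) (psi_sm a e hx)
  have hS : ∀ Y Z, ⟪(fderiv ℝ (gradient (psi a e)) x + (a * ⟪x, e⟫) • ContinuousLinearMap.id ℝ E) Y, Z⟫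
      = ⟪Y, (fderiv ℝ (gradient (psi a e)) x + (a * ⟪x, e⟫) • ContinuousLinearMap.id ℝ E) Z⟫ := by
    intro Y Z
    simp [inner_add_left, inner_add_right, hsym, inner_smul_left, inner_smul_right]
  have h0 : ∀ Y, ⟪x, Y⟫ = 0 →
      ⟪(fderiv ℝ (gradient (psi a e)) x + (a * ⟪x, e⟫) • ContinuousLinearMap.id ℝ E) Y, Y⟫ = 0 := by
    intro Y hY
    have h1 := (link_gen hx (psi_sm a e hx) hsU (psi_homog a e)
      (fun y hy => by simp [psi, hy]) hY).2
    rw [hgU] at h1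
    simp [inner_add_left, inner_smul_left, real_inner_comm x e] at h1 ⊢
    rw [h1]; ring
  refine ext_inner_right ℝ fun Z => ?_
  obtain ⟨Z', hZ', hZ⟩ := aux_decomp hx Z
  have h2 := aux_polar hS h0 hY hZ'
  simp only [_root_.add_apply, inner_add_left, _root_.smul_apply, 
    ContinuousLinearMap.id_apply, inner_smul_left, RCLike.conj_to_real] at h2
  have hYx : ⟪Y, x⟫ = 0 := by rw [real_inner_comm]; exact hY
  rw [hZ]
  simp only [inner_add_right, inner_sub_left, inner_smul_left, inner_smul_right, hxx, hZ', hYx,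
    hsym Y x, hHx, inner_neg_right, RCLike.conj_to_real, real_inner_comm (gradient (psi a e) x) Y]
  linarith

theorem psi_third (a : ℝ) (e : E) : ∃ C3 : ℝ, 0 ≤ C3 ∧ ∀ x : E, ‖x‖ = 1 → ∀ Y Z : E,
    |⟪fderiv ℝ (fderiv ℝ (gradient (psi a e))) x Z Y, Y⟫| ≤ C3 * ‖Z‖ * ‖Y‖ ^ 2 := by
  have hcont : ContinuousOn (fderiv ℝ (fderiv ℝ (gradient (psi a e)))) (Metric.sphere (0:E) 1) := by
    intro x hx
    have hx0 : x ≠ 0 := by rintro rfl; simp at hx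
    have h1 : ContDiffAt ℝ ∞ (fderiv ℝ (fderiv ℝ (gradient (psi a e)))) x :=
      (aux_hess_contDiffAt (psi_cd a e hx0)).fderiv_right (by simp)
    exact h1.continuousAt.continuousWithinAt
  obtain ⟨C, hC⟩ := (isCompact_sphere (0:E) 1).exists_bound_of_continuousOn
    (E := E →L[ℝ] E →L[ℝ] E) hcont
  refine ⟨|C|, abs_nonneg _, fun x hx Y Z => ?_⟩
  have h1 := (hC x (by simpa using hx)).trans (le_abs_self C)
  calc _ ≤ ‖fderiv ℝ (fderiv ℝ (gradient (psi a e))) x Z Y‖ * ‖Y‖ := abs_real_inner_le_norm _ _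
    _ ≤ (‖fderiv ℝ (fderiv ℝ (gradient (psi a e))) x‖ * ‖Z‖ * ‖Y‖) * ‖Y‖ := by
        gcongr
        exact ContinuousLinearMap.le_opNorm₂ _ _ _
    _ ≤ (|C| * ‖Z‖ * ‖Y‖) * ‖Y‖ := by gcongr
    _ = _ := by ring

theorem vfun_link {c : E} {h : E → ℝ} (hh : ContDiff ℝ ∞ h) {x : E} (hx : ‖x‖ = 1)
    (hp : 0 < h (c + x)) {Y : E} (hY : ⟪x, Y⟫ = 0) :
    h (c + x) * ⟪gradient (vfun c h) x, Y⟫ = ⟪gradient h (c + x), Y⟫ ∧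
    h (c + x) * (⟪fderiv ℝ (gradient (vfun c h)) x Y, Y⟫ + ⟪gradient (vfun c h) x, Y⟫ ^ 2) =
      ⟪fderiv ℝ (gradient h) (c + x) Y, Y⟫ - ⟪gradient h (c + x), x⟫ * ‖Y‖ ^ 2 := by
  have hpe : ∀ᶠ y in 𝓝 x, 0 < h (c + y) := by
    have hc : ContinuousAt (fun y : E => h (c + y)) x := by
      have := hh.continuous
      fun_prop
    exact hc.eventually (lt_mem_nhds hp)
  have hsU : SmNear (fun y => Real.log (h (c + y))) x := by
    filter_upwards [hpe] with y hy
    exact (hh.contDiffAt.comp y (contDiffAt_const.add contDiffAt_id)).log hy.ne'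
  have hhd : ∀ y, HasFDerivAt (fun y => h (c + y)) (fderiv ℝ h (c + y)) y := by
    intro y
    have h1 : DifferentiableAt ℝ h (c + y) := hh.contDiffAt.differentiableAt (by simp)
    exact h1.hasFDerivAt.comp y ((hasFDerivAt_id y).const_add c)
  have hgU : ∀ᶠ y in 𝓝 x, gradient (fun y => Real.log (h (c + y))) y =
      (h (c + y))⁻¹ • gradient h (c + y) := by
    filter_upwards [hpe] with y hy
    have h1 := (hhd y).log hy.ne'
    refine ext_inner_right ℝ fun Z => ?_
    rw [inner_gradient_left, h1.fderiv, inner_smul_left, inner_gradient_left]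
    simp
  have hgx := hgU.self_of_nhds
  have hgd : HasFDerivAt (fun y => gradient h (c + y)) (fderiv ℝ (gradient h) (c + x)) x := by
    have h1 : DifferentiableAt ℝ (gradient h) (c + x) :=
      (aux_grad_contDiffAt hh.contDiffAt).differentiableAt (by simp)
    exact h1.hasFDerivAt.comp x ((hasFDerivAt_id x).const_add c)
  have hHU := (((hasDerivAt_inv hp.ne').comp_hasFDerivAt x (hhd x)).smul hgd).congr_of_eventuallyEq hgU
  obtain ⟨k1, k2⟩ := link_gen hx (vfun_sm hh hx hp) hsU (vfun_homog c h)
    (fun y hy => vfun_unit c h hy) hY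
  have e1 : h (c + x) * ⟪gradient (vfun c h) x, Y⟫ = ⟪gradient h (c + x), Y⟫ := by
    rw [k1, hgx, inner_smul_left]
    simp only [RCLike.conj_to_real]
    field_simp
  refine ⟨e1, ?_⟩
  rw [mul_add, k2, hHU.fderiv, hgx]
  have e2 : ⟪gradient (vfun c h) x, Y⟫ = ⟪gradient h (c + x), Y⟫ / h (c + x) := by
    rw [← e1]; field_simp
  rw [e2]
  have e3 : fderiv ℝ h (c + x) Y = ⟪gradient h (c + x), Y⟫ := by rw [inner_gradient_left]
  simp [inner_add_left, inner_smul_left, -inner_gradient_left, -inner_gradient_right, e3]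
  field_simp
  ring

theorem det_rank {n : ℕ} (hfr : Module.finrank ℝ E = n + 1) {x : E} (hx : ‖x‖ = 1) {t : ℝ}
    (ht : 0 < t) : LinearMap.det ((t • ContinuousLinearMap.id ℝ E +
      ((1 - t) • innerSL ℝ x).smulRight x : E →L[ℝ] E)).toLinearMap = t ^ n := by
  have h1 : ((t • ContinuousLinearMap.id ℝ E +
      ((1 - t) • innerSL ℝ x).smulRight x : E →L[ℝ] E)).toLinearMap =
      t • LinearMap.transvection (((1 - t) / t) • (innerSL ℝ x).toLinearMap) x := by
    ext Y
    simp [LinearMap.transvection.apply, smul_smul]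
    congr 1
    field_simp
  rw [h1, LinearMap.det_smul, LinearMap.transvection.det, hfr]
  have hxx : ⟪x, x⟫ = 1 := by rw [real_inner_self_eq_norm_sq, hx]; norm_num
  simp [hx]
  field_simp
  ring

end abstractPart

section concrete
variable {n : ℕ} {θ : ℝ}

/-- center of the sphere -/
abbrev cen (n : ℕ) (θ : ℝ) : Euc n := Real.cos θ • eVec n

theorem cen_add (ξ : Euc n) : cen n θ + sphNormal n θ ξ = ξ := by
  simp [sphNormal, cen]

theorem tproj_apply (ξ Y : Euc n) :
    tproj n θ ξ Y = Y - ⟪sphNormal n θ ξ, Y⟫ • sphNormal n θ ξ := by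
  simp [tproj]

theorem op_zero {M : Euc n →L[ℝ] Euc n} (hM : ∀ Y Z, ⟪M Y, Z⟫ = ⟪Y, M Z⟫) {x : Euc n}
    (hx : ‖x‖ = 1) (hMx : M x = 0) (h0 : ∀ Y, ⟪x, Y⟫ = 0 → ⟪M Y, Y⟫ = 0) : M = 0 := by
  ext1 Y
  refine ext_inner_right ℝ fun Z => ?_
  obtain ⟨Y', hY', hY⟩ := aux_decomp hx Y
  obtain ⟨Z', hZ', hZ⟩ := aux_decomp hx Z
  rw [hY, hZ, map_add, map_smul, hMx, smul_zero, zero_add, inner_add_right, inner_smul_right,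
    hM Y' x, hMx, aux_polar hM h0 hY' hZ']
  simp

theorem sgrad_eq {h : Euc n → ℝ} (hh : ContDiff ℝ ∞ h) {ξ : Euc n} (hξ : ‖sphNormal n θ ξ‖ = 1)
    (hp : 0 < h ξ) :
    sgrad n θ h ξ = h ξ • gradient (vfun (cen n θ) h) (sphNormal n θ ξ) := by
  have hcx := cen_add (θ := θ) ξ
  set x := sphNormal n θ ξ with hxd
  have hp' : 0 < h (cen n θ + x) := by rw [hcx]; exact hp
  have hxx : ⟪x, x⟫ = 1 := by rw [real_inner_self_eq_norm_sq, hξ]; norm_num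
  refine ext_inner_right ℝ fun Z => ?_
  obtain ⟨Z', hZ', hZ⟩ := aux_decomp hξ Z
  have h1 := (vfun_link hh hξ hp' hZ').1
  have h0 := homog_inner (vfun_homog (cen n θ) h)
    ((vfun_sm hh hξ hp').self_of_nhds.differentiableAt (by simp))
  rw [hcx] at h1
  rw [sgrad, tproj_apply, ← hxd, hZ]
  simp only [inner_add_right, inner_sub_left, inner_smul_left, inner_smul_right, hxx, hZ', h0,
    RCLike.conj_to_real, ← h1, real_inner_comm (gradient h ξ) x]
  ring

theorem sgrad_log {h : Euc n → ℝ} (hh : ContDiff ℝ ∞ h) {ξ : Euc n} (hξ : ‖sphNormal n θ ξ‖ = 1)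
    (hp : 0 < h ξ) :
    sgrad n θ (fun x => Real.log (h x)) ξ = gradient (vfun (cen n θ) h) (sphNormal n θ ξ) := by
  have h1 : gradient (fun x => Real.log (h x)) ξ = (h ξ)⁻¹ • gradient h ξ := by
    have h2 : DifferentiableAt ℝ h ξ := hh.contDiffAt.differentiableAt (by simp)
    have h3 := h2.hasFDerivAt.log hp.ne'
    refine ext_inner_right ℝ fun Z => ?_
    rw [inner_gradient_left, h3.fderiv, inner_smul_left, inner_gradient_left]
    simp
  have h2 := sgrad_eq hh hξ hp
  rw [sgrad] at h2
  rw [sgrad, h1, map_smul, h2, smul_smul, inv_mul_cancel₀ hp.ne', one_smul]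

theorem bigA_symm {H : Euc n →L[ℝ] Euc n} (hH : ∀ Y Z, ⟪H Y, Z⟫ = ⟪Y, H Z⟫) (N x Y Z : Euc n) :
    ⟪bigA H N x Y, Z⟫ = ⟪Y, bigA H N x Z⟫ := by
  simp only [bigA_apply, inner_add_left, inner_add_right,
      inner_sub_left, inner_sub_right, inner_smul_left, inner_smul_right, hH]
  simp only [RCLike.conj_to_real, real_inner_comm Y]
  ring

/-- the operator for `v = log h` -/
abbrev vOp (n : ℕ) (θ : ℝ) (h : Euc n → ℝ) (x : Euc n) : Euc n →L[ℝ] Euc n :=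
  bigA (fderiv ℝ (gradient (vfun (cen n θ) h)) x) (x + gradient (vfun (cen n θ) h) x) x

theorem vOp_facts {h : Euc n → ℝ} (hh : ContDiff ℝ ∞ h) {ξ : Euc n} (hξ : ‖sphNormal n θ ξ‖ = 1)
    (hp : 0 < h ξ) :
    (∀ Y Z, ⟪vOp n θ h (sphNormal n θ ξ) Y, Z⟫ = ⟪Y, vOp n θ h (sphNormal n θ ξ) Z⟫) ∧
    vOp n θ h (sphNormal n θ ξ) (sphNormal n θ ξ) = sphNormal n θ ξ ∧
    ∀ Y, ⟪sphNormal n θ ξ, Y⟫ = 0 → h ξ * ⟪vOp n θ h (sphNormal n θ ξ) Y, Y⟫ =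
      shess n θ h ξ Y Y + h ξ * ⟪Y, Y⟫ := by
  have hcx := cen_add (θ := θ) ξ
  have hsh : ∀ Y, shess n θ h ξ Y Y = ⟪(fderiv ℝ (gradient h) ξ) Y, Y⟫
    - ⟪gradient h ξ, sphNormal n θ ξ⟫ * ⟪Y, Y⟫ := fun Y => rfl
  set x := sphNormal n θ ξ with hxd
  have hp' : 0 < h (cen n θ + x) := by rw [hcx]; exact hp
  have hxx : ⟪x, x⟫ = 1 := by rw [real_inner_self_eq_norm_sq, hξ]; norm_num
  have hs := vfun_sm hh hξ hp'
  have h0 := homog_inner (vfun_homog (cen n θ) h) (hs.self_of_nhds.differentiableAt (by simp))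
  have hH := homog_hess (vfun_homog (cen n θ) h) hs
  refine ⟨fun Y Z => bigA_symm (aux_hess_symm hs.self_of_nhds) _ _ _ _, ?_, ?_⟩
  · simp only [vOp, bigA_apply, hH, inner_add_left, hxx, h0]
    module
  · intro Y hY
    have h1 := (vfun_link hh hξ hp' hY).2
    rw [hcx] at h1
    rw [hsh]
    simp only [vOp, bigA_apply, hY, inner_add_left, inner_sub_left, inner_smul_left,
      RCLike.conj_to_real]
    rw [real_inner_self_eq_norm_sq]
    linear_combination h1

theorem vOp_pos {h : Euc n → ℝ} (hh : ContDiff ℝ ∞ h) {ξ : Euc n} (hξ : ‖sphNormal n θ ξ‖ = 1)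
    (hp : 0 < h ξ)
    (hconv : ∀ X : Euc n, IsTangent n θ ξ X → X ≠ 0 → 0 < shess n θ h ξ X X + h ξ * ⟪X, X⟫)
    (Y : Euc n) (hY : Y ≠ 0) : 0 < ⟪vOp n θ h (sphNormal n θ ξ) Y, Y⟫ := by
  obtain ⟨f1, f2, f3⟩ := vOp_facts hh hξ hp
  have hxx : ⟪sphNormal n θ ξ, sphNormal n θ ξ⟫ = 1 := by
    rw [real_inner_self_eq_norm_sq, hξ]; norm_num
  obtain ⟨Z, hZ, hYZ⟩ := aux_decomp hξ Y
  set x := sphNormal n θ ξ with hxd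
  set α := ⟪x, Y⟫
  have hZx : ⟪Z, x⟫ = 0 := by rw [real_inner_comm]; exact hZ
  have h1 : ⟪vOp n θ h x Y, Y⟫ = α ^ 2 + ⟪vOp n θ h x Z, Z⟫ := by
    rw [hYZ, map_add, map_smul, f2]
    simp only [inner_add_left, inner_add_right, inner_smul_left, inner_smul_right, hxx, hZ,
      f1 Z x, f2, hZx, RCLike.conj_to_real]
    ring
  rw [h1]
  by_cases hZ0 : Z = 0
  · have : α ≠ 0 := by
      rintro h; rw [h, hZ0] at hYZ; simp at hYZ; exact hY hYZ
    rw [hZ0]; simp; positivity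
  · have h2 := hconv Z hZx hZ0
    rw [← f3 Z hZ] at h2
    have := pos_of_mul_pos_right h2 hp.le
    positivity

theorem sdet_eq {h : Euc n → ℝ} (hh : ContDiff ℝ ∞ h) {ξ : Euc n} (hξ : ‖sphNormal n θ ξ‖ = 1)
    (hp : 0 < h ξ) :
    sdet n θ h ξ = h ξ ^ n * LinearMap.det (vOp n θ h (sphNormal n θ ξ)).toLinearMap := by
  obtain ⟨f1, f2, f3⟩ := vOp_facts hh hξ hp
  have hsh : ∀ Y, shess n θ h ξ Y Y = ⟪(fderiv ℝ (gradient h) ξ) Y, Y⟫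
    - ⟪gradient h ξ, sphNormal n θ ξ⟫ * ⟪Y, Y⟫ := fun Y => rfl
  have hxx : ⟪sphNormal n θ ξ, sphNormal n θ ξ⟫ = 1 := by
    rw [real_inner_self_eq_norm_sq, hξ]; norm_num
  have hhess : ∀ Y, hessOp n θ h ξ Y = tproj n θ ξ (fderiv ℝ (gradient h) ξ (tproj n θ ξ Y))
      - ⟪gradient h ξ, sphNormal n θ ξ⟫ • tproj n θ ξ Y + h ξ • tproj n θ ξ Y
      + ⟪sphNormal n θ ξ, Y⟫ • sphNormal n θ ξ := by
    intro Y
    simp [hessOp, thessOp, normalPart]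
  have hsymH := aux_hess_symm (hh.contDiffAt (x := ξ))
  simp only [tproj_apply] at hhess
  set x := sphNormal n θ ξ with hxd
  set D : Euc n →L[ℝ] Euc n := h ξ • ContinuousLinearMap.id ℝ (Euc n) +
      ((1 - h ξ) • innerSL ℝ x).smulRight x with hD
  have hDa : ∀ Y, D Y = h ξ • Y + ((1 - h ξ) * ⟪x, Y⟫) • x := by
    intro Y; simp [hD]
  have hxB : ∀ Y, ⟪x, vOp n θ h x Y⟫ = ⟪x, Y⟫ := fun Y => by rw [← f1, f2]
  have key : hessOp n θ h ξ - D.comp (vOp n θ h x) = 0 := by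
    refine op_zero ?_ hξ ?_ ?_
    · intro Y Z
      simp only [_root_.sub_apply, ContinuousLinearMap.comp_apply, hDa, hxB, hhess]
      simp only [inner_add_left, inner_add_right, inner_sub_left, inner_sub_right, inner_smul_left,
        inner_smul_right, f1, hsymH, map_sub, map_smul, RCLike.conj_to_real]
      rw [real_inner_comm x Y, ← hsymH Y x, real_inner_comm x (fderiv ℝ (gradient h) ξ Y)]
      ring
    · simp only [_root_.sub_apply, ContinuousLinearMap.comp_apply, hDa, hhess, f2, hxx]
      simp only [one_smul, sub_self, map_zero, inner_zero_right]
      module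
    · intro Y hY
      have hYx : ⟪Y, x⟫ = 0 := by rw [real_inner_comm]; exact hY
      have h1 := f3 Y hY
      simp only [_root_.sub_apply, ContinuousLinearMap.comp_apply, hDa, hxB, hhess, hY, zero_smul,
        sub_zero, add_zero, mul_zero]
      simp only [inner_add_left, inner_sub_left, inner_smul_left, RCLike.conj_to_real, hY, h1, hsh]
      ring
  rw [sdet, sub_eq_zero.1 key]
  change LinearMap.det (D.toLinearMap ∘ₗ (vOp n θ h x).toLinearMap) = _
  rw [LinearMap.det_comp, hD, det_rank (n := n) (by simp) hξ hp]

theorem eq_transform {p q : ℝ} {f h : Euc n → ℝ} (hh : ContDiff ℝ ∞ h) {ξ : Euc n}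
    (hξ : ‖sphNormal n θ ξ‖ = 1) (hp : 0 < h ξ) (heq : sdet n θ h ξ = eqRHS n θ p q f h ξ) :
    LinearMap.det (vOp n θ h (sphNormal n θ ξ)).toLinearMap =
      f ξ * Real.exp ((p - q) * vfun (cen n θ) h (sphNormal n θ ξ)) *
      (1 + ‖gradient (vfun (cen n θ) h) (sphNormal n θ ξ)‖ ^ 2) ^ (((n : ℝ) + 1 - q) / 2) := by
  rw [sdet_eq hh hξ hp, eqRHS, sgrad_eq hh hξ hp, norm_smul, Real.norm_of_nonneg hp.le] at heq
  rw [vfun_unit _ _ hξ, cen_add]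
  set g := ‖gradient (vfun (cen n θ) h) (sphNormal n θ ξ)‖
  have h1 : h ξ ^ 2 + (h ξ * g) ^ 2 = h ξ ^ 2 * (1 + g ^ 2) := by ring
  rw [h1, Real.mul_rpow (by positivity) (by positivity)] at heq
  have h2 : (h ξ ^ 2) ^ (((n : ℝ) + 1 - q) / 2) = h ξ ^ ((n : ℝ) + 1 - q) := by
    rw [← Real.rpow_natCast, ← Real.rpow_mul hp.le]
    congr 1; push_cast; ring
  have h3 : Real.exp ((p - q) * Real.log (h ξ)) = h ξ ^ (p - q) := by
    rw [Real.rpow_def_of_pos hp, mul_comm]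
  have h4 : h ξ ^ n * h ξ ^ (p - q) = h ξ ^ (p - 1) * h ξ ^ ((n : ℝ) + 1 - q) := by
    rw [← Real.rpow_natCast, ← Real.rpow_add hp, ← Real.rpow_add hp]
    congr 1; ring
  rw [h2] at heq
  rw [h3]
  refine mul_left_cancel₀ (pow_pos hp n).ne' (heq.trans ?_)
  linear_combination -(f ξ * (1 + g ^ 2) ^ (((n : ℝ) + 1 - q) / 2)) * h4

end concrete

section concrete
variable {n : ℕ} {θ : ℝ}

theorem pos_deriv_right {F : ℝ → ℝ} {F' : ℝ} (hF : HasDerivAt F F' 0) (hp : 0 < F') :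
    ∀ᶠ s in 𝓝[>] (0:ℝ), F 0 < F s := by
  have h1 := (hasDerivAt_iff_tendsto_slope.1 hF).eventually (lt_mem_nhds hp)
  have h2 : 𝓝[>] (0:ℝ) ≤ 𝓝[≠] 0 := nhdsWithin_mono _ fun s hs => (ne_of_gt hs)
  filter_upwards [h2 h1, self_mem_nhdsWithin] with s hs hs0
  rw [slope_def_field] at hs
  have h3 : 0 < s - 0 := by simpa using hs0
  have := (div_pos_iff_of_pos_right h3).1 hs
  linarith

theorem inner_eVec (ξ : Euc n) : ⟪ξ, eVec n⟫ = -ξ (Fin.last n) := by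
  simp [eVec, EuclideanSpace.inner_single_right]

theorem norm_eVec : ‖eVec n‖ = 1 := by
  simp [eVec]

theorem inner_ee : ⟪eVec n, eVec n⟫ = 1 := by
  rw [real_inner_self_eq_norm_sq, norm_eVec]; norm_num

/-- `cos θ / sin² θ` -/
abbrev aco (θ : ℝ) : ℝ := Real.cos θ / Real.sin θ ^ 2

/-- the auxiliary function -/
def wfun (n : ℕ) (θ : ℝ) (h : Euc n → ℝ) : Euc n → ℝ :=
  fun y => vfun (cen n θ) h y - psi (aco θ) (eVec n) y

theorem wfun_homog (h : Euc n → ℝ) (r : ℝ) (hr : 0 < r) (y : Euc n) :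
    wfun n θ h (r • y) = wfun n θ h y := by
  unfold wfun
  rw [vfun_homog _ _ _ hr, psi_homog _ _ _ hr]

theorem wfun_sm {h : Euc n → ℝ} (hh : ContDiff ℝ ∞ h) {x : Euc n} (hx : ‖x‖ = 1)
    (hp : 0 < h (cen n θ + x)) : SmNear (wfun n θ h) x := by
  filter_upwards [vfun_sm hh hx hp, psi_sm (aco θ) (eVec n) hx] with y h1 h2
  exact h1.sub h2

theorem wfun_grad {h : Euc n → ℝ} (hh : ContDiff ℝ ∞ h) {x : Euc n} (hx : ‖x‖ = 1)
    (hp : 0 < h (cen n θ + x)) : ∀ᶠ y in 𝓝 x, gradient (vfun (cen n θ) h) y =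
      gradient (wfun n θ h) y + gradient (psi (aco θ) (eVec n)) y := by
  filter_upwards [vfun_sm hh hx hp, psi_sm (aco θ) (eVec n) hx] with y h1 h2
  have d1 := h1.differentiableAt (n := ∞) (by simp)
  have d2 := h2.differentiableAt (n := ∞) (by simp)
  refine ext_inner_right ℝ fun Z => ?_
  rw [inner_add_left, inner_gradient_left, inner_gradient_left, inner_gradient_left]
  have h3 : fderiv ℝ (wfun n θ h) y = _ := fderiv_fun_sub d1 d2
  rw [h3]
  simp

theorem wfun_hess {h : Euc n → ℝ} (hh : ContDiff ℝ ∞ h) {x : Euc n} (hx : ‖x‖ = 1)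
    (hp : 0 < h (cen n θ + x)) : fderiv ℝ (gradient (vfun (cen n θ) h)) x =
      fderiv ℝ (gradient (wfun n θ h)) x + fderiv ℝ (gradient (psi (aco θ) (eVec n))) x := by
  have h1 : gradient (vfun (cen n θ) h) =ᶠ[𝓝 x] 
    fun y => gradient (wfun n θ h) y + gradient (psi (aco θ) (eVec n)) y := wfun_grad hh hx hp
  rw [h1.fderiv_eq]
  exact fderiv_fun_add
    ((aux_grad_contDiffAt (wfun_sm hh hx hp).self_of_nhds).differentiableAt (by simp))
    ((aux_grad_contDiffAt (psi_sm (aco θ) (eVec n) hx).self_of_nhds).differentiableAt (by simp))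

theorem sph_cen_add (y : Euc n) : sphNormal n θ (cen n θ + y) = y := by
  simp [sphNormal, cen]

theorem mem_cap_add {y : Euc n} (hy : ‖y‖ = 1) (h : ⟪cen n θ + y, eVec n⟫ ≤ 0) :
    cen n θ + y ∈ cap n θ := by
  refine ⟨?_, by rw [sph_cen_add]; exact hy⟩
  rw [inner_eVec] at h
  linarith

theorem bdry_facts (hθ : θ ∈ Set.Ioo 0 (π / 2)) {ξ : Euc n} (hξ : ξ ∈ capBdry n θ) :
    ⟪ξ, eVec n⟫ = 0 ∧ ⟪ξ, ξ⟫ = Real.sin θ ^ 2 ∧ ⟪sphNormal n θ ξ, conormal n θ ξ⟫ = 0 := by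
  have hs : 0 < Real.sin θ := Real.sin_pos_of_pos_of_lt_pi hθ.1 (by linarith [hθ.2, Real.pi_pos])
  have h1 : ⟪ξ, eVec n⟫ = 0 := by rw [inner_eVec, hξ.1, neg_zero]
  have h1' : ⟪eVec n, ξ⟫ = 0 := by rw [real_inner_comm]; exact h1
  have h2 : ⟪sphNormal n θ ξ, sphNormal n θ ξ⟫ = 1 := by
    rw [real_inner_self_eq_norm_sq, hξ.2]; norm_num
  have h3 : ⟪ξ, ξ⟫ = Real.sin θ ^ 2 := by
    simp only [sphNormal, inner_sub_left, inner_sub_right, inner_smul_left, inner_smul_right, h1,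
      h1', inner_ee, RCLike.conj_to_real] at h2
    have := Real.sin_sq_add_cos_sq θ
    linarith
  refine ⟨h1, h3, ?_⟩
  simp only [sphNormal, conormal, inner_sub_left, inner_add_right, inner_smul_left, inner_smul_right,
    h1, h1', inner_ee, h3, RCLike.conj_to_real, Real.cot_eq_cos_div_sin]
  field_simp
  ring

theorem bdry_neumann (hθ : θ ∈ Set.Ioo 0 (π / 2)) {h : Euc n → ℝ} (hh : ContDiff ℝ ∞ h)
    (hpos : PosOnCap n θ h) (hR : RobinBC n θ h) {ξ : Euc n} (hξ : ξ ∈ capBdry n θ) :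
    ⟪gradient (wfun n θ h) (sphNormal n θ ξ), conormal n θ ξ⟫ = 0 := by
  have hs : 0 < Real.sin θ := Real.sin_pos_of_pos_of_lt_pi hθ.1 (by linarith [hθ.2, Real.pi_pos])
  obtain ⟨h1, h2, h3⟩ := bdry_facts hθ hξ
  have hcap : ξ ∈ cap n θ := ⟨hξ.1.ge, hξ.2⟩
  have hp := hpos ξ hcap
  have hr := hR ξ hξ
  rw [sgrad_eq hh hξ.2 hp, inner_smul_left] at hr
  have hp' : 0 < h (cen n θ + sphNormal n θ ξ) := by rw [cen_add]; exact hp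
  rw [(wfun_grad hh hξ.2 hp').self_of_nhds, psi_grad _ _ hξ.2] at hr
  have he : ⟪eVec n, conormal n θ ξ⟫ = Real.sin θ := by
    rw [conormal, inner_add_right, inner_smul_right, inner_smul_right, real_inner_comm, h1, inner_ee]
    ring
  simp only [inner_add_left, inner_smul_left, inner_sub_left, he, h3, RCLike.conj_to_real, aco,
    Real.cot_eq_cos_div_sin] at hr
  have h5 : h ξ * ⟪gradient (wfun n θ h) (sphNormal n θ ξ), conormal n θ ξ⟫ = 0 := by
    have h6 : Real.cos θ / Real.sin θ ^ 2 * (Real.sin θ) = Real.cos θ / Real.sin θ := by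
      field_simp
    linear_combination hr - h ξ * h6
  exact (mul_eq_zero.1 h5).resolve_left hp.ne'

set_option maxHeartbeats 1000000 in
theorem bdry_max (hθ : θ ∈ Set.Ioo 0 (π / 2)) {h : Euc n → ℝ} (hh : ContDiff ℝ ∞ h)
    (hpos : PosOnCap n θ h) (hR : RobinBC n θ h) {ξ : Euc n} (hξ : ξ ∈ capBdry n θ)
    (hmax : ∀ ζ ∈ cap n θ, ‖gradient (wfun n θ h) (sphNormal n θ ζ)‖ ≤
      ‖gradient (wfun n θ h) (sphNormal n θ ξ)‖) :
    gradient (wfun n θ h) (sphNormal n θ ξ) = 0 := by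
  by_contra hg0
  have hs : 0 < Real.sin θ := Real.sin_pos_of_pos_of_lt_pi hθ.1 (by linarith [hθ.2, Real.pi_pos])
  have hc : 0 < Real.cos θ := Real.cos_pos_of_mem_Ioo ⟨by linarith [hθ.1, Real.pi_pos], hθ.2⟩
  have hcot : 0 < Real.cot θ := by rw [Real.cot_eq_cos_div_sin]; positivity
  have hsc := Real.sin_sq_add_cos_sq θ
  obtain ⟨h1, h2, h3⟩ := bdry_facts hθ hξ
  have hcap : ξ ∈ cap n θ := ⟨hξ.1.ge, hξ.2⟩
  have hx := hξ.2
  have hp : 0 < h (cen n θ + sphNormal n θ ξ) := by rw [cen_add]; exact hpos ξ hcap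
  have hN := bdry_neumann hθ hh hpos hR hξ
  have hsm := wfun_sm hh hx hp
  have hgx := homog_inner (wfun_homog h) (hsm.self_of_nhds.differentiableAt (by simp))
  have hHd : HasFDerivAt (gradient (wfun n θ h)) _ (sphNormal n θ ξ) :=
    ((aux_grad_contDiffAt hsm.self_of_nhds).differentiableAt (by simp)).hasFDerivAt
  have hsymH := aux_hess_symm hsm.self_of_nhds
  set x := sphNormal n θ ξ with hxd
  set g := gradient (wfun n θ h) x with hg
  set H := fderiv ℝ (gradient (wfun n θ h)) x with hH
  have hge : ⟪g, eVec n⟫ = 0 := by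
    have e1 : ⟪g, ξ⟫ - Real.cos θ * ⟪g, eVec n⟫ = 0 := by
      rw [← hgx, hxd, sphNormal, inner_sub_right, inner_smul_right]
    have e2 : Real.cos θ / Real.sin θ * ⟪g, ξ⟫ + Real.sin θ * ⟪g, eVec n⟫ = 0 := by
      rw [← hN, conormal, inner_add_right, inner_smul_right, inner_smul_right,
        Real.cot_eq_cos_div_sin]
    field_simp at e2
    linear_combination e2 - Real.cos θ * e1 - ⟪g, eVec n⟫ * hsc
  have hgξ : ⟪ξ, g⟫ = 0 := by
    have e1 : ⟪g, ξ⟫ - Real.cos θ * ⟪g, eVec n⟫ = 0 := by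
      rw [← hgx, hxd, sphNormal, inner_sub_right, inner_smul_right]
    rw [hge] at e1
    rw [real_inner_comm]; linarith
  -- boundary curve
  have hξn : ‖ξ‖ = Real.sin θ := by
    rw [real_inner_self_eq_norm_sq] at h2
    exact (pow_left_inj₀ (norm_nonneg _) hs.le (by norm_num)).1 h2
  have hkey : ⟪H g, conormal n θ ξ⟫ = -(Real.cot θ * ‖g‖ ^ 2) := by
    obtain ⟨δ, δ', hδ0, hδ'0, hδn, hδd, -, hδab⟩ := aux_curve (x := (Real.sin θ)⁻¹ • ξ)
      (Y := (Real.sin θ)⁻¹ • g) (by rw [norm_smul, hξn]; simp [abs_of_pos hs, hs.ne'])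
      (by rw [inner_smul_left, inner_smul_right, hgξ]; simp)
    have hβd : HasDerivAt (fun s => Real.sin θ • δ s) g 0 := by
      have := (hδd 0).const_smul (Real.sin θ)
      rw [hδ'0, smul_smul, mul_inv_cancel₀ hs.ne', one_smul] at this
      exact this
    have hβ0 : Real.sin θ • δ 0 = ξ := by
      rw [hδ0, smul_smul, mul_inv_cancel₀ hs.ne', one_smul]
    have hβe : ∀ s, ⟪Real.sin θ • δ s, eVec n⟫ = 0 := by
      intro s
      obtain ⟨a, b, hab⟩ := hδab s
      rw [hab]
      simp [inner_add_left, inner_smul_left, h1, hge]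
    have hβ : ∀ s, Real.sin θ • δ s ∈ capBdry n θ := by
      intro s
      have h5 := hβe s
      rw [inner_eVec] at h5
      refine ⟨by linarith, ?_⟩
      have h6 : ‖sphNormal n θ (Real.sin θ • δ s)‖ ^ 2 = 1 := by
        rw [sphNormal, norm_sub_sq_real, inner_smul_right, hβe s, norm_smul, norm_smul, hδn,
          norm_eVec, Real.norm_of_nonneg hs.le, Real.norm_of_nonneg hc.le]
        linarith
      have := norm_nonneg (sphNormal n θ (Real.sin θ • δ s))
      nlinarith only [h6, this]
    have hνd : HasDerivAt (fun s => sphNormal n θ (Real.sin θ • δ s)) g 0 := hβd.sub_const _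
    have hμd : HasDerivAt (fun s => conormal n θ (Real.sin θ • δ s)) (Real.cot θ • g) 0 :=
      (hβd.const_smul (Real.cot θ)).add_const _
    have hx0 : x = sphNormal n θ (Real.sin θ • δ 0) := by rw [hβ0]
    rw [hx0] at hHd
    have hgd := (hHd.comp_hasDerivAt 0 hνd).inner ℝ hμd
    have hz : (fun s => ⟪(gradient (wfun n θ h) ∘ fun s => sphNormal n θ (Real.sin θ • δ s)) s,
        conormal n θ (Real.sin θ • δ s)⟫) = fun _ => 0 :=
      funext fun s => bdry_neumann hθ hh hpos hR (hβ s)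
    rw [hz] at hgd
    have := hgd.unique (hasDerivAt_const (0:ℝ) (0:ℝ))
    simp only [Function.comp, hβ0] at this
    rw [← hxd, ← hg, inner_smul_right, real_inner_self_eq_norm_sq] at this
    linarith
  -- inward curve
  have hμe : ⟪conormal n θ ξ, eVec n⟫ = Real.sin θ := by
    rw [conormal, inner_add_left, inner_smul_left, inner_smul_left, h1, inner_ee]
    simp
  obtain ⟨γ, γ', hγ0, hγ'0, hγn, hγd, -, -⟩ := aux_curve (Y := -conormal n θ ξ) hx
    (by rw [inner_neg_right, h3, neg_zero])
  have d1 : HasDerivAt (fun s => -⟪cen n θ + γ s, eVec n⟫) (Real.sin θ) 0 := by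
    have := (((hγd 0).const_add (cen n θ)).inner ℝ (hasDerivAt_const (0:ℝ) (eVec n))).neg
    refine this.congr_deriv ?_
    rw [hγ'0]; simp [hμe]
  have d2 : HasDerivAt (fun s => ‖gradient (wfun n θ h) (γ s)‖ ^ 2)
      (2 * (Real.cot θ * ‖g‖ ^ 2)) 0 := by
    rw [← hγ0] at hHd
    have := (hHd.comp_hasDerivAt 0 (hγd 0)).norm_sq
    refine this.congr_deriv ?_
    simp only [Function.comp, hγ0, hγ'0]
    rw [← hg, ← hsymH, inner_neg_right, hkey, neg_neg]
  have ev1 := pos_deriv_right d1 hs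
  have ev2 := pos_deriv_right d2 (by
    have := norm_pos_iff.2 hg0
    positivity)
  obtain ⟨s, hs1, hs2⟩ := (ev1.and ev2).exists
  simp only [hγ0] at hs1 hs2
  rw [cen_add, h1] at hs1
  have hin := mem_cap_add (θ := θ) (hγn s) (by linarith)
  have h7 := hmax _ hin
  rw [sph_cen_add] at h7
  have : ‖gradient (wfun n θ h) (γ s)‖ ^ 2 ≤ ‖g‖ ^ 2 := by gcongr
  linarith

end concrete

section concrete
variable {n : ℕ} {θ : ℝ}

theorem psi_grad_le {a : ℝ} (ha : 0 ≤ a) {x : Euc n} (hx : ‖x‖ = 1) :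
    ‖gradient (psi a (eVec n)) x‖ ≤ a := by
  rw [psi_grad a _ hx, norm_smul, Real.norm_of_nonneg ha]
  have h1 : ‖eVec n - ⟪x, eVec n⟫ • x‖ ^ 2 = 1 - ⟪x, eVec n⟫ ^ 2 := by
    rw [norm_sub_sq_real, inner_smul_right, norm_smul, hx, norm_eVec, real_inner_comm, mul_one,
      Real.norm_eq_abs, sq_abs]
    ring
  have h2 : ‖eVec n - ⟪x, eVec n⟫ • x‖ ≤ 1 := by
    have := norm_nonneg (eVec n - ⟪x, eVec n⟫ • x)
    nlinarith [sq_nonneg ⟪x, eVec n⟫]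
  nlinarith

theorem cap_compact : IsCompact (cap n θ) := by
  have hc : Continuous (fun ξ : Euc n => sphNormal n θ ξ) := by
    unfold sphNormal; fun_prop
  have hc2 : Continuous (fun ξ : Euc n => ξ (Fin.last n)) := by fun_prop
  refine Metric.isCompact_of_isClosed_isBounded ?_ ?_
  · exact (isClosed_le continuous_const hc2).inter (isClosed_eq hc.norm continuous_const)
  · refine (Metric.isBounded_closedBall (x := cen n θ) (r := 1)).subset ?_
    intro ξ hξ
    rw [Metric.mem_closedBall, dist_eq_norm]
    exact hξ.2.le

set_option maxHeartbeats 1000000 in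
theorem main_est (θ p q : ℝ) (hθ : θ ∈ Set.Ioo 0 (π / 2))
    (hq1 : 1 < q) (hpq : q ≤ p) (m K : ℝ) (hm : 0 < m) :
    ∃ C : ℝ, 0 < C ∧
      ∀ f h : Euc n → ℝ, ContDiff ℝ ∞ f → (∀ ξ ∈ cap n θ, m ≤ f ξ) →
        COneNormLe n θ f K →
        ContDiff ℝ ∞ h → PosOnCap n θ h → IsConvexSol n θ h →
        SolvesEq n θ p q f h → RobinBC n θ h →
        ∀ ξ ∈ cap n θ, ‖sgrad n θ (fun x => Real.log (h x)) ξ‖ ≤ C := by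
  have hc : 0 < Real.cos θ := Real.cos_pos_of_mem_Ioo ⟨by linarith [hθ.1, Real.pi_pos], hθ.2⟩
  have ha : 0 ≤ aco θ := by unfold aco; positivity
  obtain ⟨C3, hC3, hT⟩ := psi_third (aco θ) (eVec n)
  obtain ⟨C0, hC0, hnum⟩ := numeric_bound n p q (aco θ) C3 m K hq1 hpq ha hC3 hm
  refine ⟨C0 + aco θ, by positivity, ?_⟩
  intro f h hf hfm hfK hh hpos hconv hsol hR ξ hξ
  have hpp : ∀ ζ ∈ cap n θ, 0 < h (cen n θ + sphNormal n θ ζ) := fun ζ hζ => by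
    rw [cen_add]; exact hpos ζ hζ
  have hνc : Continuous (fun ξ : Euc n => sphNormal n θ ξ) := by
    unfold sphNormal; fun_prop
  have hcont : ContinuousOn (fun ζ => ‖gradient (wfun n θ h) (sphNormal n θ ζ)‖) (cap n θ) := by
    intro ζ hζ
    have h1 := (aux_grad_contDiffAt (wfun_sm hh hζ.2 (hpp ζ hζ)).self_of_nhds).continuousAt
    exact (ContinuousAt.comp (f := fun ξ : Euc n => sphNormal n θ ξ) h1
      hνc.continuousAt).norm.continuousWithinAt
  obtain ⟨ξ0, hξ0, hmx⟩ := cap_compact.exists_isMaxOn ⟨ξ, hξ⟩ hcont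
  have hmax : ∀ ζ ∈ cap n θ, ‖gradient (wfun n θ h) (sphNormal n θ ζ)‖ ≤
      ‖gradient (wfun n θ h) (sphNormal n θ ξ0)‖ := fun ζ hζ => hmx hζ
  have hbd : ‖gradient (wfun n θ h) (sphNormal n θ ξ0)‖ ≤ C0 := by
    rcases hξ0.1.eq_or_lt with hb | hb
    · rw [bdry_max hθ hh hpos hR ⟨hb.symm, hξ0.2⟩ hmax, norm_zero]
      exact hC0.le
    have hx := hξ0.2
    have hp := hpp ξ0 hξ0
    have hcx := cen_add (θ := θ) ξ0
    have hposx := vOp_pos hh hx (hpos ξ0 hξ0) (hconv ξ0 hξ0)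
    have hsw := wfun_sm hh hx hp
    have hsψ := psi_sm (aco θ) (eVec n) hx
    have hgx := homog_inner (wfun_homog h) (hsw.self_of_nhds.differentiableAt (by simp))
    have hgr := wfun_grad hh hx hp
    have hhs := wfun_hess hh hx hp
    have hKg := hfK.2 ξ0 hξ0
    have hsg : sgrad n θ f ξ0 = gradient f ξ0 -
        ⟪sphNormal n θ ξ0, gradient f ξ0⟫ • sphNormal n θ ξ0 := tproj_apply _ _
    have hpsi := psi_grad_le (n := n) ha hx
    set x := sphNormal n θ ξ0 with hxd
    have hin : ⟪cen n θ + x, eVec n⟫ < 0 := by rw [hcx, inner_eVec]; linarith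
    have hx0 : x ≠ 0 := by rintro h0; rw [h0] at hx; simp at hx
    have hnear : ∀ᶠ y in 𝓝 x, y ≠ 0 ∧ ⟪cen n θ + ‖y‖⁻¹ • y, eVec n⟫ < 0 := by
      refine (eventually_ne_nhds hx0).and ?_
      have hca : ContinuousAt (fun y : Euc n => ⟪cen n θ + ‖y‖⁻¹ • y, eVec n⟫) x := by
        have : ContinuousAt (fun y : Euc n => ‖y‖⁻¹) x :=
          continuousAt_id.norm.inv₀ (by rw [id, hx]; norm_num)
        exact (continuousAt_const.add (this.smul continuousAt_id)).inner continuousAt_const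
      refine hca.eventually_lt continuousAt_const ?_
      simpa [hx] using hin
    have hxe : -1 ≤ ⟪x, eVec n⟫ := by
      have := abs_real_inner_le_norm x (eVec n)
      rw [hx, norm_eVec, one_mul] at this
      exact (abs_le.1 this).1
    have hxe' : ⟪x, eVec n⟫ ≤ 0 := by
      rw [inner_add_left, cen, inner_smul_left, inner_ee] at hin
      simp at hin
      linarith
    have hlm : IsLocalMax (fun y => ‖y‖ ^ 2 * ‖gradient (wfun n θ h) y‖ ^ 2) x := by
      filter_upwards [hnear] with y hy
      have hy0 : 0 < ‖y‖ := norm_pos_iff.2 hy.1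
      have hy1 : ‖(‖y‖⁻¹ • y)‖ = 1 := by
        rw [norm_smul, norm_inv, norm_norm, inv_mul_cancel₀ hy0.ne']
      have h1 := hmax _ (mem_cap_add hy1 hy.2.le)
      rw [sph_cen_add, homog_grad (wfun_homog h) (inv_pos.2 hy0), inv_inv, norm_smul,
        norm_norm] at h1
      simp only [hx, one_pow, one_mul, ← mul_pow]
      gcongr
    have hfd : DifferentiableAt ℝ (fun y => f (cen n θ + y)) x :=
      (hf.differentiable (by simp)).comp ((differentiable_id).const_add _) x
    have hfg : gradient (fun y => f (cen n θ + y)) x = gradient f ξ0 := by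
      unfold gradient
      rw [fderiv_comp_add_left, hcx]
    have hfx : f (cen n θ + x) = f ξ0 := by rw [hcx]
    have hvw : ∀ y, vfun (cen n θ) h y = wfun n θ h y + psi (aco θ) (eVec n) y := fun y => by
      unfold wfun; ring
    have heq : ∀ᶠ y in 𝓝 x, ‖y‖ = 1 →
      LinearMap.det (bigA (fderiv ℝ (gradient (wfun n θ h)) y +
          fderiv ℝ (gradient (psi (aco θ) (eVec n))) y)
      (y + (gradient (wfun n θ h) y + gradient (psi (aco θ) (eVec n)) y)) y).toLinearMap =
      f (cen n θ + y) * Real.exp ((p - q) * (wfun n θ h y + psi (aco θ) (eVec n) y)) *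
        (1 + ‖gradient (wfun n θ h) y + gradient (psi (aco θ) (eVec n)) y‖ ^ 2)
          ^ (((n : ℝ) + 1 - q) / 2) := by
      filter_upwards [hnear] with y hy hy1
      have hmem : cen n θ + y ∈ cap n θ := mem_cap_add hy1 (by
        have := hy.2.le; rw [hy1, inv_one, one_smul] at this; exact this)
      have h1 := eq_transform (p := p) (q := q) (f := f) hh hmem.2 (hpos _ hmem) (hsol _ hmem)
      have hpy := hpos _ hmem
      rw [sph_cen_add, vOp, (wfun_grad hh hy1 hpy).self_of_nhds, wfun_hess hh hy1 hpy, hvw] at h1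
      exact h1
    have hposx' : ∀ Y, Y ≠ 0 → 0 < ⟪bigA (fderiv ℝ (gradient (wfun n θ h)) x +
        fderiv ℝ (gradient (psi (aco θ) (eVec n))) x)
      (x + (gradient (wfun n θ h) x + gradient (psi (aco θ) (eVec n)) x)) x Y, Y⟫ := by
      intro Y hY
      have := hposx Y hY
      rw [vOp, hgr.self_of_nhds, hhs] at this
      exact this
    have hφ0 : 0 ≤ -(aco θ * ⟪x, eVec n⟫) := by nlinarith
    have hφ1 : -(aco θ * ⟪x, eVec n⟫) ≤ aco θ := by nlinarith
    obtain ⟨τ, Q, D, k1, k2, k3, k4, k5⟩ := interior_key (n := n) (by simp) hx hsw hsψ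
      (wfun_homog h) (fun r hr y => psi_homog _ _ _ hr y) hlm hφ0
      (fun Y hY => psi_hess (aco θ) (eVec n) hx hY) (hT x hx) hposx' hfd
      (by rw [hfx]; linarith [hfm ξ0 hξ0]) heq
    rw [hfg] at k3
    rw [hfx] at k3 k5
    set g := gradient (wfun n θ h) x with hg
    set η := gradient (psi (aco θ) (eVec n)) x with hη
    have hin2 : ⟪gradient f ξ0, g⟫ = ⟪sgrad n θ f ξ0, g⟫ := by
      rw [hsg, inner_sub_left, inner_smul_left, real_inner_comm g x, hgx]
      simp
    refine hnum ‖g‖ ‖g + η‖ _ _ ⟪η, g⟫ _ (f ξ0) τ Q D _ (norm_nonneg _) (norm_nonneg _)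
      ?_ ?_ ?_ ?_ hφ0 hφ1 ?_ (hfm ξ0 hξ0) ((le_abs_self _).trans (hfK.1 ξ0 hξ0)) k1 k2 k3 k4 k5
    · exact (abs_real_inner_le_norm _ _).trans (by gcongr)
    · rw [inner_add_left, real_inner_self_eq_norm_sq]
    · have := norm_sub_le (g + η) η
      rw [add_sub_cancel_right] at this
      linarith
    · exact (norm_add_le _ _).trans (by gcongr)
    · rw [hin2]
      exact (abs_real_inner_le_norm _ _).trans (by gcongr)
  rw [sgrad_log hh hξ.2 (hpos ξ hξ), (wfun_grad hh hξ.2 (hpp ξ hξ)).self_of_nhds]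
  refine (norm_add_le _ _).trans (add_le_add ((hmax ξ hξ).trans hbd) (psi_grad_le ha hξ.2))

end concrete

end helpers

/-- Lemma 3.3, logarithmic gradient estimate: for `p ≥ q > 1` and
`θ ∈ (0, π/2)` there is a constant `C` depending only on `n`, `p`, `q`, a lower bound `m`
for `min_{C_θ} f` and a bound `K` for `‖f‖_{C¹(C_θ)}` (but not on the solution `h`), such
that `max_{C_θ} |∇ log h| ≤ C`; moreover if `p = q = n+1` the constant is independent of
`p` and `q`. -/
theorem log_gradient_estimate
    (n : ℕ) (hn : 1 ≤ n) (θ p q : ℝ) (hθ : θ ∈ Set.Ioo 0 (π / 2))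
    (hq1 : 1 < q) (hpq : q ≤ p) (m K : ℝ) (hm : 0 < m) :
    (∃ C : ℝ, 0 < C ∧
      ∀ f h : Euc n → ℝ, ContDiff ℝ (⊤ : ℕ∞) f → (∀ ξ ∈ cap n θ, m ≤ f ξ) →
        COneNormLe n θ f K →
        ContDiff ℝ (⊤ : ℕ∞) h → PosOnCap n θ h → IsConvexSol n θ h →
        SolvesEq n θ p q f h → RobinBC n θ h →
        ∀ ξ ∈ cap n θ, ‖sgrad n θ (fun x => Real.log (h x)) ξ‖ ≤ C) ∧
    (∃ C : ℝ, 0 < C ∧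
      ∀ p' q' : ℝ, p' = (n : ℝ) + 1 → q' = (n : ℝ) + 1 →
        ∀ f h : Euc n → ℝ, ContDiff ℝ (⊤ : ℕ∞) f → (∀ ξ ∈ cap n θ, m ≤ f ξ) →
          COneNormLe n θ f K →
          ContDiff ℝ (⊤ : ℕ∞) h → PosOnCap n θ h → IsConvexSol n θ h →
          SolvesEq n θ p' q' f h → RobinBC n θ h →
          ∀ ξ ∈ cap n θ, ‖sgrad n θ (fun x => Real.log (h x)) ξ‖ ≤ C) := by
  refine ⟨main_est θ p q hθ hq1 hpq m K hm, ?_⟩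
  have hn1 : (1:ℝ) < (n:ℝ) + 1 := by
    have : (1:ℝ) ≤ (n:ℝ) := by exact_mod_cast hn
    linarith
  obtain ⟨C, hC, hCC⟩ := main_est (n := n) θ ((n:ℝ) + 1) ((n:ℝ) + 1) hθ hn1 le_rfl m K hm
  refine ⟨C, hC, ?_⟩
  intro p' q' hp' hq'
  subst hp' hq'
  exact hCC
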